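/- arXiv:1111.5159 — 3 statements merged into one kernel-verified Lean document; each statement's English description precedes it below -/
import Mathlib

section
/- There exists an absolute constant K such that for every continuous strictly convex function f : ℝ → ℝ and every finite set A ⊂ ℝ with |A| ≥ 2, one has max(|f(A)+f(A)|, |A+A|) ≥ K · |A|^{24/19} / (log|A|)^{2/19}. -/
open Finset Pointwise

noncomputable def dlt (X Y : Finset ℝ) (s : ℝ) : ℕ :=
  ((X ×ˢ Y).filter (fun p => p.1 - p.2 = s)).card

noncomputable def sg (X Y : Finset ℝ) (s : ℝ) : ℕ :=
  ((X ×ˢ Y).filter (fun p => p.1 + p.2 = s)).card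

noncomputable def En (X Y : Finset ℝ) : ℝ :=
  ∑ s ∈ X - X, (dlt X X s : ℝ) * (dlt Y Y s : ℝ)

noncomputable def E3 (X : Finset ℝ) : ℝ :=
  ∑ s ∈ X - X, (dlt X X s : ℝ) ^ 3

noncomputable def E15 (X : Finset ℝ) : ℝ :=
  ∑ s ∈ X - X, (dlt X X s : ℝ) ^ ((3 : ℝ) / 2)

/-- The points of a finite set can be grouped, from left to right, into blocks of at most `α`
elements. -/
lemma exists_monotone_blocks (X : Finset ℝ) {α : ℕ} (hα : 0 < α) :
    ∃ u : ℝ → ℕ, Monotone u ∧ (∀ x, u x ≤ X.card / α) ∧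
      ∀ k, (X.filter (fun x => u x = k)).card ≤ α := by
  have hmono : Monotone fun x : ℝ => (X.filter (· < x)).card := by
    intro x y hxy
    refine card_le_card (fun z hz => ?_)
    simp only [mem_filter] at hz ⊢
    exact ⟨hz.1, hz.2.trans_le hxy⟩
  refine ⟨fun x => (X.filter (· < x)).card / α,
    fun x y hxy => Nat.div_le_div_right (hmono hxy),
    fun x => Nat.div_le_div_right (card_le_card (filter_subset _ _)), fun k => ?_⟩
  have hcard : (Ico (α * k) (α * k + α)).card = α := by simp
  refine le_of_le_of_eq (card_le_card_of_injOn (fun x => (X.filter (· < x)).card) ?_ ?_) hcard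
  · intro x hx
    obtain ⟨-, rfl⟩ := mem_filter.1 hx
    simp only [coe_Ico, Set.mem_Ico]
    exact ⟨Nat.mul_div_le _ _, Nat.lt_mul_div_succ _ hα⟩
  · have key : ∀ x ∈ X, ∀ y, x < y → (X.filter (· < x)).card < (X.filter (· < y)).card := by
      intro x hx y hxy
      refine card_lt_card ⟨fun z hz => ?_, fun h => ?_⟩
      · simp only [mem_filter] at hz ⊢
        exact ⟨hz.1, hz.2.trans hxy⟩
      · exact lt_irrefl x (mem_filter.1 (h (mem_filter.2 ⟨hx, hxy⟩))).2
    intro x hx y hy hxy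
    rcases lt_trichotomy x y with h | h | h
    · exact absurd hxy (key x (mem_filter.1 hx).1 y h).ne
    · exact h
    · exact absurd hxy (key y (mem_filter.1 hy).1 x h).ne'

/-- If `T` is larger than the range of `w`, the excess is witnessed by collisions of `w`. -/
lemma card_le_add_card_collisions (T : Finset ℝ) (w : ℝ → ℕ) {N : ℕ} (hw : ∀ x ∈ T, w x < N) :
    T.card ≤ N + ((T ×ˢ T).filter (fun p => p.1 < p.2 ∧ w p.1 = w p.2)).card := by
  rw [← card_filter_add_card_filter_not (s := T) (fun x => ∃ y ∈ T, y < x ∧ w y = w x),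
    add_comm]
  refine add_le_add ?_ ?_
  · refine le_of_le_of_eq (card_le_card_of_injOn w (t := range N) ?_ ?_) (card_range N)
    · intro x hx
      simpa using hw x (mem_filter.1 hx).1
    · intro x hx y hy hxy
      obtain ⟨hxT, hx⟩ := mem_filter.1 hx
      obtain ⟨hyT, hy⟩ := mem_filter.1 hy
      rcases lt_trichotomy x y with h | h | h
      · exact absurd ⟨x, hxT, h, hxy⟩ hy
      · exact h
      · exact absurd ⟨y, hyT, h, hxy.symm⟩ hx
  · refine (card_le_card (fun x hx => ?_)).trans (card_image_le (f := Prod.snd))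
    obtain ⟨hxT, y, hyT, hyx, hw⟩ := mem_filter.1 hx
    exact mem_image.2 ⟨(y, x), mem_filter.2 ⟨mem_product.2 ⟨hyT, hxT⟩, hyx, hw⟩, rfl⟩

/-- The number of pairs in a common fibre. -/
lemma card_pairs_same_fibre_le (X : Finset ℝ) (u : ℝ → ℕ) {α : ℕ}
    (hu : ∀ k, (X.filter (fun x => u x = k)).card ≤ α) :
    ((X ×ˢ X).filter (fun p => u p.1 = u p.2)).card ≤ X.card * α := by
  rw [card_filter, sum_product, ← smul_eq_mul]
  refine sum_le_card_nsmul _ _ _ (fun x _ => ?_)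
  rw [← card_filter]
  simpa only [eq_comm] using hu (u x)

/-- Increments of fixed positive length of a strictly convex function are strictly increasing. -/
lemma StrictConvexOn.increment_lt {f : ℝ → ℝ} (hf : StrictConvexOn ℝ Set.univ f) {x y d : ℝ}
    (hd : 0 < d) (hxy : x < y) : f (x + d) - f x < f (y + d) - f y := by
  have h1 := hf.secant_strict_mono (a := x) (x := x + d) (y := y + d) trivial trivial trivial
    (by linarith) (by linarith) (by linarith)
  have h2 := hf.secant_strict_mono (a := y + d) (x := x) (y := y) trivial trivial trivial
    (by linarith) (by linarith) (by linarith)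
  have hL : 0 < y + d - x := by linarith
  have e1 : (f (y+d) - f x) / (y + d - x) = (f x - f (y+d)) / (x - (y+d)) := by
    rw [← neg_div_neg_eq]; congr 1 <;> ring
  rw [e1] at h1
  have h3 := h1.trans h2
  have e2 : (f y - f (y+d)) / (y - (y+d)) = (f (y+d) - f y)/ d := by
    rw [← neg_div_neg_eq]; congr 1 <;> ring
  rw [e2, add_sub_cancel_left, div_lt_div_iff_of_pos_right hd] at h3
  exact h3

/-- Exchange of summation for a layer-cake sum. -/
lemma sum_layers (T : Finset ℝ) (g : ℝ → ℕ) (w : ℕ → ℝ) (m L : ℕ) (hL : ∀ s ∈ T, g s ≤ L) :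
    ∑ s ∈ T, ∑ k ∈ Ioc m (g s), w k =
      ∑ k ∈ Ioc m L, w k * ((T.filter (fun s => k ≤ g s)).card : ℝ) := by
  have h : ∀ s ∈ T, ∑ k ∈ Ioc m (g s), w k = ∑ k ∈ Ioc m L, if k ≤ g s then w k else 0 := by
    intro s hs
    rw [← sum_filter]
    congr 1
    ext k
    have := hL s hs
    simp only [mem_Ioc, mem_filter]
    omega
  rw [sum_congr rfl h, sum_comm]
  refine sum_congr rfl (fun k _ => ?_)
  rw [← sum_filter, sum_const, nsmul_eq_mul, mul_comm]

/-- The large values of a function with cubic decay contribute little to its second moment. -/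
lemma sum_sq_tail_le (T : Finset ℝ) (g : ℝ → ℕ) (D : ℝ)
    (hD : ∀ k : ℕ, 0 < k → ((T.filter (fun s => k ≤ g s)).card : ℝ) * (k : ℝ) ^ 3 ≤ D)
    {m : ℕ} (hm : 0 < m) :
    ∑ s ∈ T.filter (fun s => m ≤ g s), (g s : ℝ) ^ 2 ≤ 3 * D / m := by
  have hsq : ∀ n : ℕ, m ≤ n → (n : ℝ) ^ 2 ≤ (m : ℝ) ^ 2 + ∑ k ∈ Ioc m n, (2 * k : ℝ) := by
    intro n hn
    induction n, hn using Nat.le_induction with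
    | base => simp
    | succ n hn ih =>
      rw [sum_Ioc_succ_top hn]
      push_cast
      nlinarith
  set U := T.filter (fun s => m ≤ g s)
  have hm0 : (0 : ℝ) < m := by exact_mod_cast hm
  have hD0 : 0 ≤ D := le_trans (by positivity) (hD 1 one_pos)
  have hcard : ∀ k : ℕ, 0 < k → ((U.filter (fun s => k ≤ g s)).card : ℝ) ≤ D / (k : ℝ) ^ 3 := by
    intro k hk
    rw [le_div_iff₀ (by positivity)]
    refine le_trans ?_ (hD k hk)
    gcongr
    exact filter_subset _ _
  have hUm : (U.card : ℝ) ≤ D / (m : ℝ) ^ 3 := by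
    rw [le_div_iff₀ (by positivity)]
    exact hD m hm
  calc ∑ s ∈ U, (g s : ℝ) ^ 2
      ≤ ∑ s ∈ U, ((m : ℝ) ^ 2 + ∑ k ∈ Ioc m (g s), (2 * k : ℝ)) :=
        sum_le_sum fun s hs => hsq _ (mem_filter.1 hs).2
    _ = U.card * (m : ℝ) ^ 2 + ∑ k ∈ Ioc m (U.sup g),
          (2 * k : ℝ) * ((U.filter (fun s => k ≤ g s)).card : ℝ) := by
        rw [sum_add_distrib, sum_const, nsmul_eq_mul,
          sum_layers U g (fun k => 2 * (k : ℝ)) m (U.sup g) fun s hs => le_sup hs]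
    _ ≤ D / (m : ℝ) ^ 3 * (m : ℝ) ^ 2 + ∑ k ∈ Ioc m (U.sup g), 2 * D * ((k : ℝ) ^ 2)⁻¹ := by
        refine add_le_add (by gcongr) (sum_le_sum fun k hk => ?_)
        have hk0 : 0 < k := hm.trans (mem_Ioc.1 hk).1
        have hk1 : (0 : ℝ) < k := by exact_mod_cast hk0
        calc (2 * k : ℝ) * ((U.filter (fun s => k ≤ g s)).card : ℝ)
            ≤ (2 * k : ℝ) * (D / (k : ℝ) ^ 3) := by
              gcongr
              exact hcard k hk0
          _ = _ := by field_simp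
    _ ≤ D / m + 2 * D * (m : ℝ)⁻¹ := by
        rw [← mul_sum]
        gcongr
        · apply le_of_eq; field_simp
        · rcases le_or_gt m (U.sup g) with h | h
          · refine (sum_Ioc_inv_sq_le_sub hm.ne' h).trans ?_
            simp
          · rw [Ioc_eq_empty (by omega), sum_empty]; positivity
    _ = 3 * D / m := by ring

/-- Third moment of a function with cubic decay. -/
lemma sum_cube_le (T : Finset ℝ) (g : ℝ → ℕ) (D : ℝ)
    (hD : ∀ k : ℕ, 0 < k → ((T.filter (fun s => k ≤ g s)).card : ℝ) * (k : ℝ) ^ 3 ≤ D)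
    {L : ℕ} (hL : ∀ s ∈ T, g s ≤ L) :
    ∑ s ∈ T, (g s : ℝ) ^ 3 ≤ 3 * D * (1 + Real.log L) := by
  have hcube : ∀ n : ℕ, (n : ℝ) ^ 3 ≤ ∑ k ∈ Ioc 0 n, (3 * (k : ℝ) ^ 2) := by
    intro n
    induction n with
    | zero => simp
    | succ n ih =>
      rw [sum_Ioc_succ_top (Nat.zero_le n)]
      push_cast
      nlinarith [n.cast_nonneg (α := ℝ)]
  have hD0 : 0 ≤ D := le_trans (by positivity) (hD 1 one_pos)
  calc ∑ s ∈ T, (g s : ℝ) ^ 3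
      ≤ ∑ s ∈ T, ∑ k ∈ Ioc 0 (g s), (3 * (k : ℝ) ^ 2) := sum_le_sum fun s _ => hcube _
    _ = ∑ k ∈ Ioc 0 L, (3 * (k : ℝ) ^ 2) * ((T.filter (fun s => k ≤ g s)).card : ℝ) :=
        sum_layers T g (fun k => 3 * (k : ℝ) ^ 2) 0 L hL
    _ ≤ ∑ k ∈ Ioc 0 L, 3 * D * (k : ℝ)⁻¹ := by
        refine sum_le_sum fun k hk => ?_
        have hk0 : 0 < k := (mem_Ioc.1 hk).1
        have hk1 : (0 : ℝ) < k := by exact_mod_cast hk0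
        rw [← div_eq_mul_inv, le_div_iff₀ hk1]
        linarith [hD k hk0]
    _ ≤ 3 * D * (1 + Real.log L) := by
        rw [← mul_sum]
        gcongr
        have h := harmonic_le_one_add_log L
        rw [harmonic_eq_sum_Icc] at h
        push_cast at h
        exact h

/-- Double counting of the pairs whose difference lies in `S`. -/
lemma sum_card_filter_sub_mem (A B S : Finset ℝ) :
    ∑ b ∈ B, (A.filter (fun a => a - b ∈ S)).card = ∑ s ∈ S, dlt A B s := by
  have h1 : ∑ b ∈ B, (A.filter (fun a => a - b ∈ S)).card =
      ((A ×ˢ B).filter (fun p => p.1 - p.2 ∈ S)).card := by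
    rw [card_filter, sum_product_right]
    simp only [card_filter]
  rw [h1, card_eq_sum_card_fiberwise (f := fun p : ℝ × ℝ => p.1 - p.2) (t := S)]
  · refine sum_congr rfl (fun s hs => ?_)
    rw [dlt, filter_filter]
    congr 1
    refine filter_congr (fun p _ => ⟨fun h => h.2, fun h => ⟨h ▸ hs, h⟩⟩)
  · intro p hp
    exact (mem_filter.1 hp).2

/-- Incidence bound for the translates by `(-b, c)` of the graph of `f` over `A`: the grid `S × F`
is cut into cells, each translate meets few cells, and two points determine at most one
translate. -/
lemma sum_dlt_mul_card_le {f : ℝ → ℝ} (hf : StrictConvexOn ℝ Set.univ f) {A B C F S : Finset ℝ}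
    (hA : MonotoneOn f A) (hF : ∀ a ∈ A, ∀ c ∈ C, f a + c ∈ F) {α β : ℕ} (hα : 0 < α)
    (hβ : 0 < β) :
    (∑ s ∈ S, dlt A B s) * C.card ≤
      B.card * C.card * (S.card / α + F.card / β + 1) + S.card * α * (F.card * β) := by
  obtain ⟨u, humono, hule, hufib⟩ := exists_monotone_blocks S hα
  obtain ⟨v, hvmono, hvle, hvfib⟩ := exists_monotone_blocks F hβ
  set N := S.card / α + F.card / β + 1
  set T : ℝ → Finset ℝ := fun b => A.filter (fun a => a - b ∈ S) with hT
  set w : ℝ × ℝ → ℝ → ℕ := fun q a => u (a - q.1) + v (f a + q.2)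
  set K : ℝ × ℝ → Finset (ℝ × ℝ) := fun q =>
    (T q.1 ×ˢ T q.1).filter (fun p => p.1 < p.2 ∧ w q p.1 = w q p.2)
  have hTA : ∀ {b a}, a ∈ T b → a ∈ A ∧ a - b ∈ S := fun h => mem_filter.1 h
  have hcurve : ∀ q ∈ B ×ˢ C, (T q.1).card ≤ N + (K q).card := by
    intro q _
    refine card_le_add_card_collisions _ _ (fun a _ => ?_)
    have h1 := hule (a - q.1)
    have h2 := hvle (f a + q.2)
    simp only [w, N]
    omega
  have hcell : ∀ {q : ℝ × ℝ} {p : ℝ × ℝ}, p ∈ K q →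
      u (p.1 - q.1) = u (p.2 - q.1) ∧ v (f p.1 + q.2) = v (f p.2 + q.2) := by
    intro q p hp
    obtain ⟨hp, hlt, hw⟩ := mem_filter.1 hp
    obtain ⟨h1, h2⟩ := mem_product.1 hp
    have hu := humono (sub_le_sub_right hlt.le q.1)
    have hv := hvmono (add_le_add_left (hA (hTA h1).1 (hTA h2).1 hlt.le) q.2)
    simp only [w] at hw
    omega
  have hpairs : ∑ q ∈ B ×ˢ C, (K q).card ≤ S.card * α * (F.card * β) := by
    rw [← card_sigma]
    refine le_trans ?_ (Nat.mul_le_mul (card_pairs_same_fibre_le S u hufib)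
      (card_pairs_same_fibre_le F v hvfib))
    rw [← card_product]
    refine card_le_card_of_injOn (fun x => ((x.2.1 - x.1.1, x.2.2 - x.1.1),
      (f x.2.1 + x.1.2, f x.2.2 + x.1.2))) ?_ ?_
    · rintro ⟨q, p⟩ hx
      obtain ⟨hq, hp⟩ := mem_sigma.1 hx
      obtain ⟨-, hqC⟩ := mem_product.1 hq
      obtain ⟨h1, h2⟩ := mem_product.1 (mem_filter.1 hp).1
      simp only [coe_product, Set.mem_prod, mem_coe, mem_filter, mem_product]
      exact ⟨⟨⟨(hTA h1).2, (hTA h2).2⟩, (hcell hp).1⟩,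
        ⟨⟨hF _ (hTA h1).1 _ hqC, hF _ (hTA h2).1 _ hqC⟩, (hcell hp).2⟩⟩
    · rintro ⟨⟨b, c⟩, ⟨a₁, a₂⟩⟩ hx ⟨⟨b', c'⟩, ⟨a₁', a₂'⟩⟩ hx' h
      have hlt : a₁ < a₂ := (mem_filter.1 (mem_sigma.1 hx).2).2.1
      simp only [Prod.mk.injEq] at h
      obtain ⟨⟨e1, e2⟩, e3, e4⟩ := h
      have ha : a₁ = a₁' := by
        rcases lt_trichotomy a₁ a₁' with h | h | h
        · have := hf.increment_lt (sub_pos.2 hlt) h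
          rw [add_sub_cancel, show a₁' + (a₂ - a₁) = a₂' by linarith] at this
          linarith
        · exact h
        · have := hf.increment_lt (sub_pos.2 hlt) h
          rw [add_sub_cancel, show a₁' + (a₂ - a₁) = a₂' by linarith] at this
          linarith
      subst ha
      obtain rfl : b = b' := by linarith
      obtain rfl : a₂ = a₂' := by linarith
      obtain rfl : c = c' := by linarith
      rfl
  calc (∑ s ∈ S, dlt A B s) * C.card = ∑ q ∈ B ×ˢ C, (T q.1).card := by
        rw [← sum_card_filter_sub_mem, sum_product]
        simp only [sum_const, smul_eq_mul, ← mul_sum, hT, mul_comm]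
    _ ≤ ∑ q ∈ B ×ˢ C, (N + (K q).card) := sum_le_sum hcurve
    _ ≤ _ := by
        rw [sum_add_distrib, sum_const, card_product, smul_eq_mul]
        exact Nat.add_le_add_left hpairs _

lemma dlt_le_card_left (A B : Finset ℝ) (s : ℝ) : dlt A B s ≤ A.card := by
  refine card_le_card_of_injOn Prod.fst
    (fun p hp => (mem_product.1 (mem_filter.1 hp).1).1) ?_
  intro p hp q hq h
  have h1 := (mem_filter.1 hp).2
  have h2 := (mem_filter.1 hq).2
  exact Prod.ext h (by linarith)

lemma dlt_le_card_right (A B : Finset ℝ) (s : ℝ) : dlt A B s ≤ B.card := by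
  refine card_le_card_of_injOn Prod.snd
    (fun p hp => (mem_product.1 (mem_filter.1 hp).1).2) ?_
  intro p hp q hq h
  have h1 := (mem_filter.1 hp).2
  have h2 := (mem_filter.1 hq).2
  exact Prod.ext (by linarith) h

lemma sum_dlt_le (A B S : Finset ℝ) : ∑ s ∈ S, dlt A B s ≤ A.card * B.card := by
  rw [← sum_card_filter_sub_mem, mul_comm, ← smul_eq_mul]
  exact sum_le_card_nsmul _ _ _ fun b _ => card_filter_le _ _

/-- There are few differences with many representations. -/
lemma card_mul_cube_le {f : ℝ → ℝ} (hf : StrictConvexOn ℝ Set.univ f) {A B C F S : Finset ℝ}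
    (hA : MonotoneOn f A) (hF : ∀ a ∈ A, ∀ c ∈ C, f a + c ∈ F) (hAF : A.card ≤ F.card)
    (hCF : C.card ≤ F.card) {k : ℕ} (hk : 0 < k) (hS : ∀ s ∈ S, k ≤ dlt A B s) :
    (S.card : ℝ) * (k : ℝ) ^ 3 * C.card ≤ 512 * (F.card : ℝ) ^ 2 * (B.card : ℝ) ^ 2 := by
  rcases S.eq_empty_or_nonempty with rfl | ⟨s, hs⟩
  · simp only [card_empty, Nat.cast_zero, zero_mul]
    positivity
  have hk0 : (0 : ℝ) < k := by exact_mod_cast hk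
  have hm0 : (0 : ℝ) < S.card := by exact_mod_cast card_pos.2 ⟨s, hs⟩
  have hkA : (k : ℝ) ≤ A.card := by exact_mod_cast (hS s hs).trans (dlt_le_card_left A B s)
  have hkB : (k : ℝ) ≤ B.card := by exact_mod_cast (hS s hs).trans (dlt_le_card_right A B s)
  have hAF' : (A.card : ℝ) ≤ F.card := by exact_mod_cast hAF
  have hCF' : (C.card : ℝ) ≤ F.card := by exact_mod_cast hCF
  have hM0 := hk0.trans_le hkB
  have hkF := hkA.trans hAF'
  have hF0 := hk0.trans_le hkF
  have hsum : S.card * k ≤ ∑ s ∈ S, dlt A B s := by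
    rw [← smul_eq_mul]
    exact card_nsmul_le_sum _ _ _ hS
  have hmk : (S.card : ℝ) * k ≤ F.card * B.card := by
    have h : (S.card : ℝ) * k ≤ A.card * B.card := by
      exact_mod_cast hsum.trans (sum_dlt_le A B S)
    exact h.trans (by gcongr)
  have hinc : ∀ α β : ℕ, 0 < α → 0 < β → (S.card : ℝ) * k * C.card ≤
      B.card * C.card * (S.card / α + F.card / β + 1) + S.card * α * (F.card * β) := by
    intro α β hα hβ
    have h := (Nat.mul_le_mul_right C.card hsum).trans
      (sum_dlt_mul_card_le hf (B := B) (S := S) hA hF hα hβ)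
    have h' : (S.card : ℝ) * k * C.card ≤
        B.card * C.card * (((S.card / α : ℕ) : ℝ) + ((F.card / β : ℕ) : ℝ) + 1) +
          S.card * α * (F.card * β) := by exact_mod_cast h
    refine h'.trans ?_
    gcongr
    · exact Nat.cast_div_le
    · exact Nat.cast_div_le
  set m : ℝ := (S.card : ℝ)
  set M : ℝ := (B.card : ℝ)
  set n : ℝ := (C.card : ℝ)
  set Y : ℝ := (F.card : ℝ)
  have hn0 : 0 ≤ n := Nat.cast_nonneg _
  rcases lt_or_ge (m * k) (8 * M) with hsmall | hlarge
  · calc m * (k : ℝ) ^ 3 * n = (m * k) * (k * k) * n := by ring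
      _ ≤ (8 * M) * (M * Y) * Y := by gcongr
      _ ≤ 512 * Y ^ 2 * M ^ 2 := by nlinarith [mul_pos (mul_pos hM0 hM0) (mul_pos hF0 hF0)]
  obtain ⟨α, hα1, hα2⟩ : ∃ α : ℕ, 8 * M / k ≤ α ∧ (α : ℝ) ≤ 16 * M / k := by
    refine ⟨⌈8 * M / k⌉₊, Nat.le_ceil _, ?_⟩
    have h1 : 1 ≤ 8 * M / k := by rw [le_div_iff₀ hk0]; linarith
    have h2 : 16 * M / k = 8 * M / k + 8 * M / k := by ring
    linarith [Nat.ceil_lt_add_one (zero_le_one.trans h1)]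
  obtain ⟨β, hβ1, hβ2⟩ : ∃ β : ℕ, 8 * M * Y / (m * k) ≤ β ∧ (β : ℝ) ≤ 16 * M * Y / (m * k) := by
    refine ⟨⌈8 * M * Y / (m * k)⌉₊, Nat.le_ceil _, ?_⟩
    have h1 : 1 ≤ 8 * M * Y / (m * k) := by
      rw [le_div_iff₀ (by positivity)]
      nlinarith
    have h2 : 16 * M * Y / (m * k) = 8 * M * Y / (m * k) + 8 * M * Y / (m * k) := by ring
    linarith [Nat.ceil_lt_add_one (zero_le_one.trans h1)]
  have hα0 : (0 : ℝ) < α := lt_of_lt_of_le (by positivity) hα1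
  have hβ0 : (0 : ℝ) < β := lt_of_lt_of_le (by positivity) hβ1
  have hinc' := hinc α β (Nat.cast_pos.1 hα0) (Nat.cast_pos.1 hβ0)
  have hcells : M * (m / α + Y / β + 1) ≤ m * k * (3 / 8) := by
    have h1 : m / α ≤ m * k / (8 * M) := by
      rw [div_le_iff₀ hk0] at hα1
      rw [div_le_div_iff₀ hα0 (by positivity)]
      nlinarith
    have h2 : Y / β ≤ m * k / (8 * M) := by
      rw [div_le_iff₀ (by positivity)] at hβ1
      rw [div_le_div_iff₀ hβ0 (by positivity)]
      nlinarith
    have h3 : 1 ≤ m * k / (8 * M) := by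
      rw [le_div_iff₀ (by positivity)]
      linarith
    calc M * (m / α + Y / β + 1) ≤ M * (m * k / (8 * M) + m * k / (8 * M) + m * k / (8 * M)) := by
          gcongr
      _ = m * k * (3 / 8) := by field_simp; ring
  have hprod : m * α * (Y * β) ≤ 256 * Y ^ 2 * M ^ 2 / (k : ℝ) ^ 2 := by
    calc m * α * (Y * β) ≤ m * (16 * M / k) * (Y * (16 * M * Y / (m * k))) := by gcongr
      _ = _ := by field_simp; ring
  have hfin : m * k * n ≤ 512 * Y ^ 2 * M ^ 2 / (k : ℝ) ^ 2 := by
    have h1 := mul_le_mul_of_nonneg_right hcells hn0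
    have h2 : 512 * Y ^ 2 * M ^ 2 / (k : ℝ) ^ 2 = 2 * (256 * Y ^ 2 * M ^ 2 / (k : ℝ) ^ 2) := by ring
    have h3 : 0 ≤ m * k * n := by positivity
    rw [h2]
    nlinarith
  rw [le_div_iff₀ (by positivity)] at hfin
  linarith

lemma mem_fibre {X Y : Finset ℝ} {s : ℝ} {p : ℝ × ℝ} :
    p ∈ (X ×ˢ Y).filter (fun p => p.1 - p.2 = s) ↔ (p.1 ∈ X ∧ p.2 ∈ Y) ∧ p.1 - p.2 = s := by
  rw [mem_filter, mem_product]

lemma card_filter_sub_mem (A : Finset ℝ) (s : ℝ) :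
    (A.filter (fun x => x - s ∈ A)).card = dlt A A s := by
  refine card_bij' (fun x _ => (x, x - s)) (fun p _ => p.1) ?_ ?_ ?_ ?_
  · intro x hx
    obtain ⟨h1, h2⟩ := mem_filter.1 hx
    exact mem_fibre.2 ⟨⟨h1, h2⟩, by simp⟩
  · intro p hp
    obtain ⟨⟨h1, h2⟩, h3⟩ := mem_fibre.1 hp
    exact mem_filter.2 ⟨h1, by rwa [← h3, sub_sub_cancel]⟩
  · intro x hx
    rfl
  · intro p hp
    obtain ⟨-, h3⟩ := mem_fibre.1 hp
    exact Prod.ext rfl (by simp only; linarith)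

lemma addEnergy_le_sum_sq (A B : Finset ℝ) :
    A.addEnergy B ≤ ∑ t ∈ A - B, dlt A B t ^ 2 := by
  simp only [dlt, sq, ← card_product]
  rw [← card_sigma, addEnergy]
  refine card_le_card_of_injOn
    (fun x => ⟨x.1.1 - x.2.2, (x.1.1, x.2.2), (x.1.2, x.2.1)⟩) ?_ ?_
  · rintro ⟨⟨a, a'⟩, ⟨b, b'⟩⟩ hx
    simp only [coe_filter, mem_product, Set.mem_ofPred_eq] at hx
    obtain ⟨⟨⟨h1, h2⟩, h3, h4⟩, h5⟩ := hx
    exact mem_sigma.2 ⟨sub_mem_sub h1 h4, mem_product.2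
      ⟨mem_fibre.2 ⟨⟨h1, h4⟩, rfl⟩, mem_fibre.2 ⟨⟨h2, h3⟩, by simp only; linarith⟩⟩⟩
  · rintro ⟨⟨a, a'⟩, ⟨b, b'⟩⟩ - ⟨⟨c, c'⟩, ⟨d, d'⟩⟩ - h
    simp only [Sigma.mk.injEq, heq_eq_eq, Prod.mk.injEq] at h ⊢
    tauto

lemma sum_dlt_mul_dlt_le (A B T : Finset ℝ) :
    ∑ s ∈ T, dlt A A s * dlt B B s ≤ ∑ t ∈ A - B, dlt A B t ^ 2 := by
  simp only [dlt, sq, ← card_product]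
  rw [← card_sigma, ← card_sigma]
  refine card_le_card_of_injOn
    (fun x => ⟨x.2.1.1 - x.2.2.1, (x.2.1.1, x.2.2.1), (x.2.1.2, x.2.2.2)⟩) ?_ ?_
  · rintro ⟨s, ⟨a, a'⟩, ⟨b, b'⟩⟩ hx
    obtain ⟨h1, h2⟩ := mem_product.1 (mem_sigma.1 hx).2
    obtain ⟨⟨ha, ha'⟩, hs⟩ := mem_fibre.1 h1
    obtain ⟨⟨hb, hb'⟩, hs'⟩ := mem_fibre.1 h2
    simp only at ha ha' hs hb hb' hs'
    exact mem_sigma.2 ⟨sub_mem_sub ha hb, mem_product.2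
      ⟨mem_fibre.2 ⟨⟨ha, hb⟩, rfl⟩, mem_fibre.2 ⟨⟨ha', hb'⟩, by simp only; linarith⟩⟩⟩
  · rintro ⟨s, ⟨a, a'⟩, ⟨b, b'⟩⟩ hx ⟨t, ⟨c, c'⟩, ⟨d, d'⟩⟩ hy h
    have hs := (mem_fibre.1 (mem_product.1 (mem_sigma.1 hx).2).1).2
    have ht := (mem_fibre.1 (mem_product.1 (mem_sigma.1 hy).2).1).2
    simp only [Sigma.mk.injEq, heq_eq_eq, Prod.mk.injEq] at h hs ht ⊢
    obtain ⟨-, ⟨rfl, rfl⟩, rfl, rfl⟩ := h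
    exact ⟨by rw [← hs, ← ht], by simp⟩

lemma sum_addEnergy_le_sum_cube (A T : Finset ℝ) :
    ∑ s ∈ T, A.addEnergy (A.filter (fun x => x - s ∈ A)) ≤ ∑ t ∈ A - A, dlt A A t ^ 3 := by
  simp only [dlt, pow_succ, pow_zero, one_mul, ← card_product, addEnergy]
  rw [← card_sigma, ← card_sigma]
  refine card_le_card_of_injOn
    (fun x => ⟨x.2.1.1 - x.2.1.2, ((x.2.1.1, x.2.1.2), (x.2.2.2, x.2.2.1)),
      (x.2.2.2 - x.1, x.2.2.1 - x.1)⟩) ?_ ?_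
  · rintro ⟨s, ⟨a, a'⟩, ⟨b, b'⟩⟩ hx
    have hx' := (mem_sigma.1 hx).2
    simp only [mem_filter, mem_product] at hx'
    obtain ⟨⟨⟨ha, ha'⟩, ⟨hb, hbs⟩, hb', hbs'⟩, h⟩ := hx'
    refine mem_sigma.2 ⟨sub_mem_sub ha ha', mem_product.2 ⟨mem_product.2
      ⟨mem_fibre.2 ⟨⟨ha, ha'⟩, rfl⟩, mem_fibre.2 ⟨⟨hb', hb⟩, ?_⟩⟩,
      mem_fibre.2 ⟨⟨hbs', hbs⟩, ?_⟩⟩⟩ <;> (simp only; linarith)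
  · rintro ⟨s, ⟨a, a'⟩, ⟨b, b'⟩⟩ - ⟨t, ⟨c, c'⟩, ⟨d, d'⟩⟩ - h
    simp only [Sigma.mk.injEq, heq_eq_eq, Prod.mk.injEq] at h ⊢
    obtain ⟨-, ⟨⟨rfl, rfl⟩, rfl, rfl⟩, h, -⟩ := h
    exact ⟨by linarith, by simp⟩

/-- Katz–Koester inclusion combined with the Cauchy–Schwarz inequality. -/
lemma sq_card_mul_sum_sq_le (A T : Finset ℝ) {m : ℕ} (hT : ∀ s ∈ T, dlt A A s ≤ m) :
    (A.card * ∑ s ∈ T, dlt A A s ^ 2) ^ 2 ≤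
      m * (∑ t ∈ A - (A + A), dlt A (A + A) t ^ 2) * ∑ t ∈ A - A, dlt A A t ^ 3 := by
  have hKK : ∀ s, (A + A.filter (fun x => x - s ∈ A)).card ≤ dlt (A + A) (A + A) s := by
    intro s
    rw [← card_filter_sub_mem]
    refine card_le_card (fun z hz => ?_)
    obtain ⟨a, ha, x, hx, rfl⟩ := mem_add.1 hz
    obtain ⟨hx, hxs⟩ := mem_filter.1 hx
    exact mem_filter.2 ⟨add_mem_add ha hx, by rw [add_sub_assoc]; exact add_mem_add ha hxs⟩
  rw [mul_sum]
  refine (sum_sq_le_sum_mul_sum_of_sq_le_mul T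
    (f := fun s => m * (dlt A A s * dlt (A + A) (A + A) s))
    (g := fun s => A.addEnergy (A.filter (fun x => x - s ∈ A)))
    (fun _ _ => Nat.zero_le _) (fun _ _ => Nat.zero_le _) (fun s hs => ?_)).trans ?_
  · have hE := le_card_add_mul_addEnergy A (A.filter (fun x => x - s ∈ A))
    rw [card_filter_sub_mem] at hE
    calc (A.card * dlt A A s ^ 2) ^ 2
        = dlt A A s * dlt A A s * (A.card ^ 2 * dlt A A s ^ 2) := by ring
      _ ≤ m * dlt A A s * (dlt (A + A) (A + A) s *
            A.addEnergy (A.filter (fun x => x - s ∈ A))) :=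
          Nat.mul_le_mul (Nat.mul_le_mul_right _ (hT s hs))
            (hE.trans (Nat.mul_le_mul_right _ (hKK s)))
      _ = _ := by ring
  · rw [← mul_sum]
    exact Nat.mul_le_mul (Nat.mul_le_mul_left _ (sum_dlt_mul_dlt_le A (A + A) T))
      (sum_addEnergy_le_sum_cube A T)

/-- Energy bound deduced from a cubic decay of the number of popular differences. -/
lemma sum_dlt_sq_le {A B : Finset ℝ} {Y : ℝ} (hA : A.Nonempty) (hB : B.Nonempty)
    (hAY : (A.card : ℝ) ≤ Y)
    (h : ∀ k : ℕ, 0 < k → (((A - B).filter (fun s => k ≤ dlt A B s)).card : ℝ) * (k : ℝ) ^ 3 ≤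
      512 * Y ^ 2 * (B.card : ℝ) ^ 2 / A.card) :
    ∑ t ∈ A - B, (dlt A B t : ℝ) ^ 2 ≤ 1538 * Y * B.card * √B.card := by
  have hn : (0 : ℝ) < A.card := by exact_mod_cast hA.card_pos
  have hM : (1 : ℝ) ≤ B.card := by exact_mod_cast hB.card_pos
  have hY : 0 < Y := hn.trans_le hAY
  have hr : 1 ≤ √(B.card : ℝ) := Real.one_le_sqrt.2 hM
  have hrsq : √(B.card : ℝ) * √B.card = B.card := Real.mul_self_sqrt (by linarith)
  have hsum : ∑ t ∈ A - B, (dlt A B t : ℝ) ≤ A.card * B.card := by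
    exact_mod_cast sum_dlt_le A B (A - B)
  set n : ℝ := (A.card : ℝ)
  set M : ℝ := (B.card : ℝ)
  set r : ℝ := √M
  obtain ⟨m, hm1, hm2⟩ : ∃ m : ℕ, Y * r / n ≤ m ∧ (m : ℝ) ≤ 2 * (Y * r / n) := by
    refine ⟨⌈Y * r / n⌉₊, Nat.le_ceil _, ?_⟩
    have h1 : 1 ≤ Y * r / n := by rw [le_div_iff₀ hn]; nlinarith
    linarith [Nat.ceil_lt_add_one (zero_le_one.trans h1)]
  have hm0 : (0 : ℝ) < m := lt_of_lt_of_le (by positivity) hm1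
  have htail := sum_sq_tail_le (A - B) (dlt A B) _ h (Nat.cast_pos.1 hm0)
  have hlow : ∑ t ∈ (A - B).filter (fun s => ¬ m ≤ dlt A B s), (dlt A B t : ℝ) ^ 2 ≤
      m * (n * M) := by
    calc ∑ t ∈ (A - B).filter (fun s => ¬ m ≤ dlt A B s), (dlt A B t : ℝ) ^ 2
        ≤ ∑ t ∈ (A - B).filter (fun s => ¬ m ≤ dlt A B s), m * (dlt A B t : ℝ) := by
          refine sum_le_sum fun t ht => ?_
          have : (dlt A B t : ℝ) ≤ m := by exact_mod_cast (not_le.1 (mem_filter.1 ht).2).le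
          rw [sq]
          gcongr
      _ ≤ ∑ t ∈ A - B, m * (dlt A B t : ℝ) :=
          sum_le_sum_of_subset_of_nonneg (filter_subset _ _) fun _ _ _ => by positivity
      _ ≤ m * (n * M) := by
          rw [← mul_sum]
          gcongr
  rw [← sum_filter_add_sum_filter_not (A - B) (fun s => m ≤ dlt A B s)]
  have h1 : (m : ℝ) * (n * M) ≤ 2 * Y * M * r := by
    calc (m : ℝ) * (n * M) ≤ 2 * (Y * r / n) * (n * M) := by gcongr
      _ = _ := by field_simp
  have h2 : 3 * (512 * Y ^ 2 * M ^ 2 / n) / m ≤ 1536 * Y * M * r := by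
    rw [div_le_iff₀ hm0]
    calc 3 * (512 * Y ^ 2 * M ^ 2 / n) = 1536 * Y * M * r * (Y * r / n) := by
          have : M ^ 2 = M * (r * r) := by rw [hrsq]; ring
          rw [this]; ring
      _ ≤ _ := by gcongr
  linarith

/-- The main estimate for a set on which the convex function is strictly increasing. -/
lemma card_pow_twelve_le {f : ℝ → ℝ} (hf : StrictConvexOn ℝ Set.univ f) {A : Finset ℝ}
    (hne : A.Nonempty) (hA : StrictMonoOn f A) :
    (A.card : ℝ) ^ 12 ≤ 144 * 512 ^ 2 * 1538 * ((A.image f + A.image f).card : ℝ) ^ 5 *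
      ((A + A).card : ℝ) ^ 4 * √((A + A).card : ℝ) * (1 + Real.log A.card) := by
  have hCcard : (A.image f).card = A.card := card_image_of_injOn hA.injOn
  have hCne : (A.image f).Nonempty := hne.image f
  have hAF : A.card ≤ (A.image f + A.image f).card :=
    hCcard ▸ card_le_card_add_right hCne
  have hrich : ∀ B : Finset ℝ, ∀ k : ℕ, 0 < k →
      (((A - B).filter (fun s => k ≤ dlt A B s)).card : ℝ) * (k : ℝ) ^ 3 ≤
        512 * ((A.image f + A.image f).card : ℝ) ^ 2 * (B.card : ℝ) ^ 2 / A.card := by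
    intro B k hk
    rw [le_div_iff₀ (by exact_mod_cast hne.card_pos)]
    have := card_mul_cube_le hf (C := A.image f) (F := A.image f + A.image f) hA.monotoneOn
      (fun a ha c hc => add_mem_add (mem_image_of_mem f ha) hc) hAF (hCcard ▸ hAF) hk
      (fun s hs => (mem_filter.1 hs).2) (S := (A - B).filter (fun s => k ≤ dlt A B s)) (B := B)
    rwa [hCcard] at this
  have hS1 : (1 : ℝ) ≤ (A + A).card := by exact_mod_cast (hne.add hne).card_pos
  have hAF' : (A.card : ℝ) ≤ (A.image f + A.image f).card := by exact_mod_cast hAF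
  have hn1 : (1 : ℝ) ≤ A.card := by exact_mod_cast hne.card_pos
  have hW := sum_dlt_sq_le hne (hne.add hne) hAF' (hrich (A + A))
  have hcube := sum_cube_le (A - A) (dlt A A) _ (hrich A) fun s _ => dlt_le_card_left A A s
  have hQlow : (A.card : ℝ) ^ 4 ≤ (A + A).card * ∑ t ∈ A - A, (dlt A A t : ℝ) ^ 2 := by
    have h := (le_card_add_mul_addEnergy A A).trans
      (Nat.mul_le_mul_left _ (addEnergy_le_sum_sq A A))
    calc (A.card : ℝ) ^ 4 = (A.card : ℝ) ^ 2 * (A.card : ℝ) ^ 2 := by ring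
      _ ≤ _ := by exact_mod_cast h
  have hQup : ∑ t ∈ A - A, (dlt A A t : ℝ) ^ 2 ≤ (A.card : ℝ) ^ 3 := by
    calc ∑ t ∈ A - A, (dlt A A t : ℝ) ^ 2 ≤ ∑ t ∈ A - A, (A.card : ℝ) * dlt A A t := by
          refine sum_le_sum fun t _ => ?_
          have : (dlt A A t : ℝ) ≤ A.card := by exact_mod_cast dlt_le_card_left A A t
          rw [sq]
          gcongr
      _ ≤ (A.card : ℝ) * (A.card * A.card) := by
          rw [← mul_sum]
          gcongr
          exact_mod_cast sum_dlt_le A A (A - A)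
      _ = _ := by ring
  have htail := fun m : ℕ => sum_sq_tail_le (A - A) (dlt A A) _ (hrich A) (m := m)
  have hKK : ∀ m : ℕ, ((A.card : ℝ) *
      ∑ t ∈ (A - A).filter (fun s => ¬ m ≤ dlt A A s), (dlt A A t : ℝ) ^ 2) ^ 2 ≤
      m * (∑ t ∈ A - (A + A), (dlt A (A + A) t : ℝ) ^ 2) *
        ∑ t ∈ A - A, (dlt A A t : ℝ) ^ 3 := by
    intro m
    have h := sq_card_mul_sum_sq_le A
      ((A - A).filter (fun s => ¬ m ≤ dlt A A s)) fun s hs => (not_le.1 (mem_filter.1 hs).2).le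
    exact_mod_cast h
  have hsplit := fun m : ℕ => sum_filter_add_sum_filter_not (A - A) (fun s => m ≤ dlt A A s)
    fun t => (dlt A A t : ℝ) ^ 2
  have hlog : 0 ≤ Real.log A.card := Real.log_nonneg hn1
  set n : ℝ := (A.card : ℝ)
  set Y : ℝ := ((A.image f + A.image f).card : ℝ)
  set S : ℝ := ((A + A).card : ℝ)
  set Q : ℝ := ∑ t ∈ A - A, (dlt A A t : ℝ) ^ 2
  set D : ℝ := 512 * Y ^ 2 * n ^ 2 / n with hD
  have hDeq : D = 512 * Y ^ 2 * n := by rw [hD]; field_simp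
  have hn0 : 0 < n := by linarith
  have hS0 : 0 < S := by linarith
  have hY0 : 0 < Y := by linarith
  have hD0 : 0 < D := by rw [hDeq]; positivity
  have hQ0 : 0 < Q := pos_of_mul_pos_right (lt_of_lt_of_le (by positivity) hQlow) hS0.le
  have hQD : Q ≤ D := by
    calc Q ≤ 1 * n ^ 2 * n := by linarith
      _ ≤ 512 * Y ^ 2 * n := by gcongr; norm_num
      _ = D := hDeq.symm
  obtain ⟨m, hm1, hm2⟩ : ∃ m : ℕ, 6 * D / Q ≤ m ∧ (m : ℝ) ≤ 12 * D / Q := by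
    refine ⟨⌈6 * D / Q⌉₊, Nat.le_ceil _, ?_⟩
    have h1 : 1 ≤ 6 * D / Q := by rw [le_div_iff₀ hQ0]; linarith
    have h2 : 12 * D / Q = 6 * D / Q + 6 * D / Q := by ring
    linarith [Nat.ceil_lt_add_one (zero_le_one.trans h1)]
  have hm0 : (0 : ℝ) < m := lt_of_lt_of_le (by positivity) hm1
  have hhalf : Q / 2 ≤ ∑ t ∈ (A - A).filter (fun s => ¬ m ≤ dlt A A s), (dlt A A t : ℝ) ^ 2 := by
    have h1 : 3 * D / m ≤ Q / 2 := by
      rw [div_le_iff₀ hQ0] at hm1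
      rw [div_le_iff₀ hm0]
      linarith
    linarith [htail m (Nat.cast_pos.1 hm0), hsplit m]
  have hmain : (n * (Q / 2)) ^ 2 ≤
      12 * D / Q * (1538 * Y * S * √S) * (3 * D * (1 + Real.log n)) := by
    refine le_trans ?_ ((hKK m).trans ?_)
    · gcongr
    · have h1 : 0 ≤ 12 * D / Q * (1538 * Y * S * √S) := by positivity
      have h2 : 0 ≤ ∑ t ∈ A - (A + A), (dlt A (A + A) t : ℝ) ^ 2 :=
        sum_nonneg fun _ _ => pow_nonneg (Nat.cast_nonneg _) _
      have h3 : 0 ≤ ∑ t ∈ A - A, (dlt A A t : ℝ) ^ 3 :=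
        sum_nonneg fun _ _ => pow_nonneg (Nat.cast_nonneg _) _
      exact mul_le_mul (mul_le_mul hm2 hW h2 (hm0.le.trans hm2)) hcube h3 h1
  have hmain' : Q ^ 3 ≤ 144 * 512 ^ 2 * 1538 * Y ^ 5 * S * √S * (1 + Real.log n) := by
    have h1 : 12 * D / Q * (1538 * Y * S * √S) * (3 * D * (1 + Real.log n)) =
        n ^ 2 * (144 * 512 ^ 2 * 1538 * Y ^ 5 * S * √S * (1 + Real.log n)) / (4 * Q) := by
      rw [hDeq]; field_simp; ring
    rw [h1, le_div_iff₀ (by positivity)] at hmain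
    have h2 : (n * (Q / 2)) ^ 2 * (4 * Q) = n ^ 2 * Q ^ 3 := by ring
    rw [h2] at hmain
    exact le_of_mul_le_mul_left hmain (by positivity)
  calc n ^ 12 = (n ^ 4) ^ 3 := by ring
    _ ≤ (S * Q) ^ 3 := by gcongr
    _ = S ^ 3 * Q ^ 3 := by ring
    _ ≤ S ^ 3 * (144 * 512 ^ 2 * 1538 * Y ^ 5 * S * √S * (1 + Real.log n)) := by gcongr
    _ = _ := by ring

lemma StrictConvexOn.comp_neg_univ {f : ℝ → ℝ} (hf : StrictConvexOn ℝ Set.univ f) :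
    StrictConvexOn ℝ Set.univ (fun x => f (-x)) := by
  refine ⟨convex_univ, fun x _ y _ hxy a b ha hb hab => ?_⟩
  have h := hf.2 (Set.mem_univ (-x)) (Set.mem_univ (-y)) (neg_injective.ne hxy) ha hb hab
  simpa only [smul_neg, neg_add] using h

lemma StrictConvexOn.lt_of_le_of_lt {f : ℝ → ℝ} (hf : StrictConvexOn ℝ Set.univ f) {x y z : ℝ}
    (hxy : x < y) (hyz : y < z) (hxz : f x ≤ f z) : f y < f z := by
  have h := hf.lt_on_openSegment (Set.mem_univ x) (Set.mem_univ z) (hxy.trans hyz).ne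
    (z := y) (by rw [openSegment_eq_Ioo (hxy.trans hyz)]; exact ⟨hxy, hyz⟩)
  rwa [max_eq_right hxz] at h

/-- A quarter of a finite set lies where a strictly convex function is strictly monotone, up to a
reflection. -/
lemma exists_strictMonoOn_subset {f : ℝ → ℝ} (hf : StrictConvexOn ℝ Set.univ f) {A : Finset ℝ}
    (hA : 2 ≤ A.card) :
    ∃ (g : ℝ → ℝ) (B : Finset ℝ), StrictConvexOn ℝ Set.univ g ∧ StrictMonoOn g B ∧ B.Nonempty ∧
      B.card ≤ A.card ∧ A.card ≤ 4 * B.card ∧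
      (B.image g + B.image g).card ≤ (A.image f + A.image f).card ∧
      (B + B).card ≤ (A + A).card := by
  obtain ⟨a₀, ha₀, hmin⟩ := A.exists_min_image f (card_pos.1 (by omega))
  have hsplit : A.card ≤ (A.filter (a₀ < ·)).card + (A.filter (· < a₀)).card + 1 := by
    rw [← card_singleton a₀]
    refine (card_le_card (fun x hx => ?_)).trans
      ((card_union_le _ _).trans (Nat.add_le_add_right (card_union_le _ _) _))
    rcases lt_trichotomy x a₀ with h | h | h <;> simp [hx, h]
  rcases le_total (A.filter (· < a₀)).card (A.filter (a₀ < ·)).card with h | h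
  · have hsub : A.filter (a₀ < ·) ⊆ A := filter_subset _ _
    refine ⟨f, A.filter (a₀ < ·), hf, ?_, card_pos.1 (by omega), card_le_card hsub, by omega,
      card_le_card (add_subset_add (image_subset_image hsub) (image_subset_image hsub)),
      card_le_card (add_subset_add hsub hsub)⟩
    intro x hx y hy hxy
    exact hf.lt_of_le_of_lt (mem_filter.1 hx).2 hxy (hmin y (mem_filter.1 hy).1)
  · have hsub : A.filter (· < a₀) ⊆ A := filter_subset _ _
    have himage : (-(A.filter (· < a₀))).image (fun x => f (-x)) = (A.filter (· < a₀)).image f := by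
      rw [← image_neg_eq_neg, image_image]
      simp [Function.comp_def]
    refine ⟨fun x => f (-x), -(A.filter (· < a₀)), hf.comp_neg_univ, ?_, ?_, ?_, ?_, ?_, ?_⟩
    · intro x hx y hy hxy
      have hx' := mem_filter.1 (mem_neg'.1 hx)
      have hy' := mem_filter.1 (mem_neg'.1 hy)
      refine hf.comp_neg_univ.lt_of_le_of_lt (x := -a₀) (by linarith [hx'.2]) hxy ?_
      simpa using hmin _ hy'.1
    · exact card_pos.1 (by rw [card_neg]; omega)
    · rw [card_neg]
      exact card_le_card hsub
    · rw [card_neg]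
      omega
    · rw [himage]
      exact card_le_card (add_subset_add (image_subset_image hsub) (image_subset_image hsub))
    · rw [← neg_add, card_neg]
      exact card_le_card (add_subset_add hsub hsub)

theorem stmt14 : ∃ K : ℝ, 0 < K ∧
    ∀ f : ℝ → ℝ, Continuous f → StrictConvexOn ℝ Set.univ f →
    ∀ A : Finset ℝ, 2 ≤ A.card →
    max ((A.image f + A.image f).card : ℝ) ((A + A).card : ℝ) ≥
      K * (A.card : ℝ) ^ ((24 : ℝ) / 19) / (Real.log A.card) ^ ((2 : ℝ) / 19) := by
  obtain ⟨c, hc⟩ : ∃ c : ℝ, c = 3 * 4 ^ 12 * (144 * 512 ^ 2 * 1538) := ⟨_, rfl⟩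
  have hc0 : 0 < c := by rw [hc]; positivity
  refine ⟨((c ^ 2) ^ ((1 : ℝ) / 19))⁻¹, by positivity, fun f _ hf A hA => ?_⟩
  obtain ⟨g, B, hg, hmono, hne, hBA, hAB, hF, hS⟩ := exists_strictMonoOn_subset hf hA
  have h12 := card_pow_twelve_le hg hne hmono
  have hB1 : (1 : ℝ) ≤ B.card := by exact_mod_cast hne.card_pos
  have hBA' : (B.card : ℝ) ≤ A.card := by exact_mod_cast hBA
  have hAB' : (A.card : ℝ) ≤ 4 * B.card := by exact_mod_cast hAB
  have hlog2 : 1 / 2 ≤ Real.log A.card := by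
    have : Real.log 2 ≤ Real.log A.card :=
      Real.log_le_log two_pos (by exact_mod_cast hA)
    linarith [Real.log_two_gt_d9]
  have hlogB : Real.log B.card ≤ Real.log A.card := Real.log_le_log (by linarith) hBA'
  have hlogB0 : 0 ≤ Real.log B.card := Real.log_nonneg hB1
  set X : ℝ := max ((A.image f + A.image f).card : ℝ) ((A + A).card : ℝ)
  have hFX : ((B.image g + B.image g).card : ℝ) ≤ X :=
    le_trans (by exact_mod_cast hF) (le_max_left _ _)
  have hSX : ((B + B).card : ℝ) ≤ X := le_trans (by exact_mod_cast hS) (le_max_right _ _)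
  set n : ℝ := (A.card : ℝ)
  have hX0 : 0 ≤ X := le_trans (Nat.cast_nonneg _) hSX
  have hn0 : 0 < n := by linarith
  have hbound : n ^ 12 ≤ c * X ^ 9 * √X * Real.log n := by
    calc n ^ 12 ≤ (4 * (B.card : ℝ)) ^ 12 := by gcongr
      _ = 4 ^ 12 * (B.card : ℝ) ^ 12 := by ring
      _ ≤ 4 ^ 12 * (144 * 512 ^ 2 * 1538 * X ^ 5 * X ^ 4 * √X * (3 * Real.log n)) := by
          gcongr
          refine h12.trans ?_
          gcongr
          linarith
      _ = _ := by rw [hc]; ring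
  have hsq : n ^ 24 ≤ c ^ 2 * X ^ 19 * Real.log n ^ 2 := by
    calc n ^ 24 = (n ^ 12) ^ 2 := by ring
      _ ≤ (c * X ^ 9 * √X * Real.log n) ^ 2 := by gcongr
      _ = c ^ 2 * X ^ 18 * √X ^ 2 * Real.log n ^ 2 := by ring
      _ = _ := by rw [Real.sq_sqrt hX0]; ring
  have hlog0 : 0 < Real.log n := by linarith
  have hroot := Real.rpow_le_rpow (by positivity) hsq (show (0 : ℝ) ≤ 1 / 19 by norm_num)
  rw [Real.mul_rpow (by positivity) (by positivity), Real.mul_rpow (by positivity) (by positivity),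
    ← Real.rpow_natCast n, ← Real.rpow_natCast X, ← Real.rpow_natCast (Real.log n),
    ← Real.rpow_mul hn0.le, ← Real.rpow_mul hX0, ← Real.rpow_mul hlog0.le] at hroot
  norm_num at hroot
  rw [ge_iff_le, div_le_iff₀ (by positivity), inv_mul_le_iff₀ (by positivity), ← mul_assoc]
  norm_num
  exact hroot
end

section
/- There exists an absolute constant K such that for every continuous strictly convex function f : ℝ → ℝ and every finite set A ⊂ ℝ with |A| ≥ 2, one has |A + f(A)| ≥ K · |A|^{24/19} / (log|A|)^{2/19}. -/
open Finset Pointwise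

/-- The planar set `{(p a, q a) : a ∈ A}` is a monotone chain in which every nonzero difference
vector is represented at most once. -/
structure IsSidonChain (A : Finset ℝ) (p q : ℝ → ℝ) : Prop where
  injOn_left : Set.InjOn p A
  injOn_right : Set.InjOn q A
  vary : MonovaryOn q p A ∨ AntivaryOn q p A
  sidon : ∀ a ∈ A, ∀ b ∈ A, ∀ a' ∈ A, ∀ b' ∈ A, a ≠ b → p a - p b = p a' - p b' →
    q a - q b = q a' - q b' → a = a'

lemma IsSidonChain.symm {A : Finset ℝ} {p q : ℝ → ℝ} (h : IsSidonChain A p q) :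
    IsSidonChain A q p where
  injOn_left := h.injOn_right
  injOn_right := h.injOn_left
  vary := h.vary.imp MonovaryOn.symm AntivaryOn.symm
  sidon a ha b hb a' ha' b' hb' hab hp hq := h.sidon a ha b hb a' ha' b' hb' hab hq hp

/-- The index of the block containing `x` when `S` is cut, in increasing order, into blocks of
size `h`. -/
noncomputable def blockIndex (S : Finset ℝ) (h : ℕ) (x : ℝ) : ℕ :=
  (S.filter (· < x)).card / h

lemma blockIndex_mono (S : Finset ℝ) (h : ℕ) : Monotone (blockIndex S h) := fun x y hxy =>
  Nat.div_le_div_right (card_le_card fun z hz => by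
    simp only [mem_filter] at hz ⊢
    exact ⟨hz.1, hz.2.trans_le hxy⟩)

lemma blockIndex_le (S : Finset ℝ) (h : ℕ) (x : ℝ) : blockIndex S h x ≤ S.card / h :=
  Nat.div_le_div_right (card_filter_le _ _)

lemma card_blockIndex_fiber_le (S : Finset ℝ) {h : ℕ} (hh : 0 < h) (k : ℕ) :
    (S.filter (fun x => blockIndex S h x = k)).card ≤ h := by
  have hcard : (Finset.Ico (k * h) (k * h + h)).card = h := by simp
  refine le_of_le_of_eq ?_ hcard
  refine card_le_card_of_injOn (fun x => (S.filter (· < x)).card) ?_ ?_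
  · intro x hx
    rw [mem_coe, mem_filter, blockIndex] at hx
    have := (Nat.div_eq_iff hh).1 hx.2
    simp only [coe_Ico, Set.mem_Ico]
    omega
  · have key : ∀ x ∈ S, ∀ y, x < y → (S.filter (· < x)).card < (S.filter (· < y)).card := by
      intro x hx y hxy
      refine card_lt_card ⟨fun z hz => ?_, fun hsub => ?_⟩
      · simp only [mem_filter] at hz ⊢
        exact ⟨hz.1, hz.2.trans hxy⟩
      · have := hsub (mem_filter.2 ⟨hx, hxy⟩)
        simp at this
    intro x hx y hy hxy
    simp only [coe_filter, Set.mem_ofPred_eq] at hx hy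
    rcases lt_trichotomy x y with h1 | h1 | h1
    · exact absurd hxy (key x hx.1 y h1).ne
    · exact h1
    · exact absurd hxy (key y hy.1 x h1).ne'

lemma card_le_card_image_add_card_offDiag {α β : Type*} [DecidableEq α] [DecidableEq β]
    (I : Finset α) (φ : α → β) :
    I.card ≤ (I.image φ).card + (I.offDiag.filter (fun x => φ x.1 = φ x.2)).card := by
  have h1 := card_eq_sum_card_image φ I
  have h2 : (I.offDiag.filter (fun x => φ x.1 = φ x.2)).card
      = ∑ y ∈ I.image φ, ((I.filter (fun a => φ a = y)).offDiag).card := by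
    rw [card_eq_sum_card_fiberwise (f := fun x => φ x.1) (t := I.image φ)]
    · refine sum_congr rfl fun y _ => congrArg _ ?_
      ext ⟨a, b⟩
      simp only [mem_filter, mem_offDiag]
      grind
    · intro x hx
      simp only [coe_filter, mem_offDiag, Set.mem_ofPred_eq] at hx
      exact mem_coe.2 (mem_image_of_mem _ hx.1.1)
  rw [h1, h2, card_eq_sum_ones, ← sum_add_distrib]
  refine sum_le_sum fun y _ => ?_
  rw [offDiag_card]
  generalize (I.filter (fun a => φ a = y)).card = n
  rcases n with _ | _ | n
  · simp
  · simp
  · have : (n + 1 + 1) * (n + 1 + 1) = (n + 1 + 1) + (n + 1 + 1) * (n + 1) := by ring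
    rw [this]
    simp only [Nat.add_sub_cancel_left]
    nlinarith

/-- Pairs of points of the grid `S × Y` lying in a common cell. -/
lemma card_same_cell_le (S Y : Finset ℝ) {h k : ℕ} (hh : 0 < h) (hk : 0 < k) :
    (((S ×ˢ Y) ×ˢ (S ×ˢ Y)).filter (fun x => blockIndex S h x.1.1 = blockIndex S h x.2.1 ∧
      blockIndex Y k x.1.2 = blockIndex Y k x.2.2)).card ≤ S.card * Y.card * (h * k) := by
  rw [← card_product S Y]
  rw [card_eq_sum_card_fiberwise (f := Prod.fst) (t := S ×ˢ Y)]
  · rw [← smul_eq_mul, ← sum_const]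
    refine sum_le_sum fun x _ => ?_
    refine le_trans ?_ (Nat.mul_le_mul (card_blockIndex_fiber_le S hh (blockIndex S h x.1))
      (card_blockIndex_fiber_le Y hk (blockIndex Y k x.2)))
    rw [← card_product]
    refine card_le_card_of_injOn Prod.snd ?_ ?_
    · rintro ⟨u, v⟩ hu
      simp only [coe_filter, mem_filter, mem_product, Set.mem_ofPred_eq, coe_product,
        Set.mem_prod] at hu ⊢
      obtain ⟨⟨⟨-, h1⟩, h2, h3⟩, rfl⟩ := hu
      exact ⟨⟨h1.1, h2.symm⟩, h1.2, h3.symm⟩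
    · rintro ⟨u, v⟩ hu ⟨u', v'⟩ hu' huv
      simp only [coe_filter, mem_filter, Set.mem_ofPred_eq] at hu hu' huv
      rw [hu.2, hu'.2, huv]
  · intro x hx
    simp only [coe_filter, mem_product, Set.mem_ofPred_eq] at hx
    simpa using hx.1.1

/-- An incidence bound of Szemerédi–Trotter type, for the translates of `{(p a, q a) : a ∈ A}` and
the points of a Cartesian product cut into cells. -/
lemma IsSidonChain.card_incidences_le {A : Finset ℝ} {p q : ℝ → ℝ} (H : IsSidonChain A p q)
    (B C S : Finset ℝ) {h k : ℕ} (hh : 0 < h) (hk : 0 < k) :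
    ((A ×ˢ (B ×ˢ C)).filter (fun x => p x.1 - x.2.1 ∈ S)).card ≤
      B.card * C.card * (S.card / h + (A.image q + C).card / k + 1) +
        S.card * (A.image q + C).card * (h * k) := by
  set Y := A.image q + C with hY
  set I := (A ×ˢ (B ×ˢ C)).filter (fun x => p x.1 - x.2.1 ∈ S) with hI
  set m := S.card / h + Y.card / k + 1 with hm
  obtain ⟨w, hwm, hw⟩ : ∃ w : ℝ × ℝ × ℝ → ℕ, (∀ x, w x < m) ∧
      ∀ x ∈ I, ∀ y ∈ I, x.2 = y.2 → w x = w y →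
        blockIndex S h (p x.1 - x.2.1) = blockIndex S h (p y.1 - y.2.1) ∧
        blockIndex Y k (q x.1 + x.2.2) = blockIndex Y k (q y.1 + y.2.2) := by
    have hlt : ∀ a ∈ A, ∀ a' ∈ A, a ≠ a' → p a < p a' ∨ p a' < p a := fun a ha a' ha' hne =>
      lt_or_gt_of_ne fun he => hne (H.injOn_left ha ha' he)
    rcases H.vary with hv | hv
    · refine ⟨fun x => blockIndex S h (p x.1 - x.2.1) + blockIndex Y k (q x.1 + x.2.2),
        fun x => ?_, ?_⟩
      · have h1 := blockIndex_le S h (p x.1 - x.2.1)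
        have h2 := blockIndex_le Y k (q x.1 + x.2.2)
        change _ + _ < m
        omega
      · rintro ⟨a, b, c⟩ hx ⟨a', b', c'⟩ hy hbc hw
        simp only [Prod.mk.injEq] at hbc
        obtain ⟨rfl, rfl⟩ := hbc
        simp only [hI, mem_filter, mem_product] at hx hy hw ⊢
        rcases eq_or_ne a a' with rfl | hne
        · exact ⟨rfl, rfl⟩
        rcases hlt a hx.1.1 a' hy.1.1 hne with h1 | h1
        · have h2 := hv hx.1.1 hy.1.1 h1
          have h3 := blockIndex_mono S h (sub_le_sub_right h1.le b)
          have h4 := blockIndex_mono Y k (add_le_add_left h2 c)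
          omega
        · have h2 := hv hy.1.1 hx.1.1 h1
          have h3 := blockIndex_mono S h (sub_le_sub_right h1.le b)
          have h4 := blockIndex_mono Y k (add_le_add_left h2 c)
          omega
    · refine ⟨fun x => blockIndex S h (p x.1 - x.2.1) +
        (Y.card / k - blockIndex Y k (q x.1 + x.2.2)), fun x => ?_, ?_⟩
      · have h1 := blockIndex_le S h (p x.1 - x.2.1)
        have h2 := blockIndex_le Y k (q x.1 + x.2.2)
        change _ + _ < m
        omega
      · rintro ⟨a, b, c⟩ hx ⟨a', b', c'⟩ hy hbc hw
        simp only [Prod.mk.injEq] at hbc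
        obtain ⟨rfl, rfl⟩ := hbc
        simp only [hI, mem_filter, mem_product] at hx hy hw ⊢
        have h5 := blockIndex_le Y k (q a + c)
        have h6 := blockIndex_le Y k (q a' + c)
        rcases eq_or_ne a a' with rfl | hne
        · exact ⟨rfl, rfl⟩
        rcases hlt a hx.1.1 a' hy.1.1 hne with h1 | h1
        · have h2 := hv hx.1.1 hy.1.1 h1
          have h3 := blockIndex_mono S h (sub_le_sub_right h1.le b)
          have h4 := blockIndex_mono Y k (add_le_add_left h2 c)
          omega
        · have h2 := hv hy.1.1 hx.1.1 h1
          have h3 := blockIndex_mono S h (sub_le_sub_right h1.le b)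
          have h4 := blockIndex_mono Y k (add_le_add_left h2 c)
          omega
  refine (card_le_card_image_add_card_offDiag I (fun x => (x.2, w x))).trans
    (add_le_add ?_ ?_)
  · have : (I.image (fun x => (x.2, w x))) ⊆ (B ×ˢ C) ×ˢ Finset.range m := by
      intro z hz
      obtain ⟨x, hx, rfl⟩ := mem_image.1 hz
      simp only [hI, mem_filter, mem_product] at hx
      simp only [mem_product, mem_range]
      exact ⟨hx.1.2, hwm x⟩
    simpa [card_product] using card_le_card this
  · refine le_trans ?_ (card_same_cell_le S Y hh hk)
    refine card_le_card_of_injOn (fun x => ((p x.1.1 - x.1.2.1, q x.1.1 + x.1.2.2),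
      (p x.2.1 - x.2.2.1, q x.2.1 + x.2.2.2))) ?_ ?_
    · rintro ⟨x, y⟩ hxy
      simp only [coe_filter, mem_offDiag, Set.mem_ofPred_eq, Prod.mk.injEq] at hxy
      obtain ⟨⟨hx, hy, -⟩, h1, h2⟩ := hxy
      have hc := hw x hx y hy h1 h2
      simp only [hI, mem_filter, mem_product] at hx hy
      simp only [coe_filter, mem_product, Set.mem_ofPred_eq]
      exact ⟨⟨⟨hx.2, add_mem_add (mem_image_of_mem _ hx.1.1) hx.1.2.2⟩,
        ⟨hy.2, add_mem_add (mem_image_of_mem _ hy.1.1) hy.1.2.2⟩⟩, hc⟩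
    · rintro ⟨⟨a, b, c⟩, ⟨a', b', c'⟩⟩ hx ⟨⟨d, e, f⟩, ⟨d', e', f'⟩⟩ hy hxy
      simp only [coe_filter, mem_offDiag, Set.mem_ofPred_eq, Prod.mk.injEq, hI, mem_filter,
        mem_product, ne_eq] at hx hy hxy
      obtain ⟨⟨⟨⟨ha, -⟩, -⟩, ⟨⟨ha', -⟩, -⟩, hne⟩, ⟨rfl, rfl⟩, -⟩ := hx
      obtain ⟨⟨⟨⟨hd, -⟩, -⟩, ⟨⟨hd', -⟩, -⟩, hne'⟩, ⟨rfl, rfl⟩, -⟩ := hy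
      obtain ⟨⟨e1, e2⟩, e3, e4⟩ := hxy
      have haa : a ≠ a' := fun h => hne ⟨h, rfl, rfl⟩
      have had : a = d := H.sidon a ha a' ha' d hd d' hd' haa (by linarith) (by linarith)
      subst had
      have hb : b = e := by linarith
      have hc : c = f := by linarith
      subst hb hc
      have : a' = d' := H.injOn_left ha' hd' (by linarith)
      subst this
      rfl

lemma dlt_image_left {A : Finset ℝ} {p : ℝ → ℝ} (hp : Set.InjOn p A) (B : Finset ℝ) (s : ℝ) :
    dlt (A.image p) B s = ((A ×ˢ B).filter (fun x => p x.1 - x.2 = s)).card := by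
  symm
  refine card_bij (fun x _ => (p x.1, x.2)) ?_ ?_ ?_
  · simp only [mem_filter, mem_product, mem_image]
    exact fun x hx => ⟨⟨⟨x.1, hx.1.1, rfl⟩, hx.1.2⟩, hx.2⟩
  · simp only [mem_filter, mem_product, Prod.mk.injEq]
    exact fun x hx y hy h => Prod.ext (hp hx.1.1 hy.1.1 h.1) h.2
  · simp only [mem_filter, mem_product, mem_image]
    rintro ⟨_, b⟩ ⟨⟨⟨a, ha, rfl⟩, hb⟩, h⟩
    exact ⟨(a, b), ⟨⟨ha, hb⟩, h⟩, rfl⟩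

lemma dlt_le_card_left_s15 (X Y : Finset ℝ) (s : ℝ) : dlt X Y s ≤ X.card := by
  refine card_le_card_of_injOn Prod.fst ?_ ?_
  · intro x hx
    simp only [coe_filter, mem_product, Set.mem_ofPred_eq] at hx
    exact hx.1.1
  · rintro ⟨a, b⟩ hx ⟨a', b'⟩ hy h
    simp only [coe_filter, mem_product, Set.mem_ofPred_eq] at hx hy h
    obtain rfl := h
    rw [Prod.mk.injEq]
    exact ⟨rfl, by linarith [hx.2, hy.2]⟩

lemma dlt_le_card_right_s15 (X Y : Finset ℝ) (s : ℝ) : dlt X Y s ≤ Y.card := by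
  refine card_le_card_of_injOn Prod.snd ?_ ?_
  · intro x hx
    simp only [coe_filter, mem_product, Set.mem_ofPred_eq] at hx
    exact hx.1.2
  · rintro ⟨a, b⟩ hx ⟨a', b'⟩ hy h
    simp only [coe_filter, mem_product, Set.mem_ofPred_eq] at hx hy h
    obtain rfl := h
    rw [Prod.mk.injEq]
    exact ⟨by linarith [hx.2, hy.2], rfl⟩

lemma sum_dlt_le_s15 (X Y T : Finset ℝ) : ∑ s ∈ T, dlt X Y s ≤ X.card * Y.card := by
  rw [← card_product]
  refine le_of_eq_of_le ?_ (card_filter_le _ (fun x => x.1 - x.2 ∈ T))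
  rw [card_eq_sum_card_fiberwise (f := fun x => x.1 - x.2) (t := T)]
  · refine sum_congr rfl fun s hs => ?_
    unfold dlt
    congr 1
    ext x
    simp only [mem_filter]
    grind
  · intro x hx
    simp only [coe_filter, Set.mem_ofPred_eq] at hx
    exact hx.2

/-- Upper bound for the number of differences with at least `τ` representations. -/
lemma IsSidonChain.card_rich_mul_le {A : Finset ℝ} {p q : ℝ → ℝ} (H : IsSidonChain A p q)
    (hA : A.Nonempty) (B C S : Finset ℝ) {τ : ℕ} (hτ : 1 ≤ τ)
    (hS : ∀ s ∈ S, τ ≤ dlt (A.image p) B s) :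
    (S.card : ℝ) * τ ^ 3 * C.card ≤ 130 * B.card ^ 2 * ((A.image q + C).card : ℝ) ^ 2 := by
  rcases S.eq_empty_or_nonempty with rfl | hSne
  · simp only [card_empty, Nat.cast_zero, zero_mul]; positivity
  rcases C.eq_empty_or_nonempty with rfl | hCne
  · simp
  obtain ⟨s₀, hs₀⟩ := hSne
  have hτA : τ ≤ A.card := (hS s₀ hs₀).trans
    ((dlt_le_card_left_s15 _ _ _).trans card_image_le)
  have hτB : τ ≤ B.card := (hS s₀ hs₀).trans (dlt_le_card_right_s15 _ _ _)
  have hAY : A.card ≤ (A.image q + C).card := by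
    rw [← card_image_of_injOn H.injOn_right]
    exact card_le_card_add_right hCne
  have hCY : C.card ≤ (A.image q + C).card := card_le_card_add_left (hA.image q)
  have hSτ : S.card * τ ≤ A.card * B.card := by
    calc S.card * τ = ∑ s ∈ S, τ := by simp
      _ ≤ ∑ s ∈ S, dlt (A.image p) B s := sum_le_sum hS
      _ ≤ _ := (sum_dlt_le_s15 _ _ _).trans (Nat.mul_le_mul_right _ card_image_le)
  have hI : S.card * τ * C.card ≤
      ((A ×ˢ (B ×ˢ C)).filter (fun x => p x.1 - x.2.1 ∈ S)).card := by
    have h1 : S.card * τ ≤ ((A ×ˢ B).filter (fun x : ℝ × ℝ => p x.1 - x.2 ∈ S)).card := by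
      rw [card_eq_sum_card_fiberwise (f := fun x : ℝ × ℝ => p x.1 - x.2) (t := S)]
      · rw [← smul_eq_mul, ← sum_const]
        refine sum_le_sum fun s hs => (hS s hs).trans ?_
        rw [dlt_image_left H.injOn_left]
        refine card_le_card fun x hx => ?_
        simp only [mem_filter] at hx ⊢
        exact ⟨⟨hx.1, hx.2 ▸ hs⟩, hx.2⟩
      · intro x hx
        simp only [coe_filter, Set.mem_ofPred_eq] at hx
        exact hx.2
    refine (Nat.mul_le_mul_right _ h1).trans ?_
    rw [← card_product]
    refine card_le_card_of_injOn (fun x => (x.1.1, x.1.2, x.2)) ?_ ?_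
    · intro x hx
      simp only [coe_product, coe_filter, mem_product, Set.mem_prod, Set.mem_ofPred_eq,
        mem_coe] at hx ⊢
      tauto
    · rintro ⟨⟨a, b⟩, c⟩ - ⟨⟨a', b'⟩, c'⟩ - h
      simp only [Prod.mk.injEq] at h ⊢
      tauto
  have hS0 : (0 : ℝ) < S.card := by exact_mod_cast card_pos.2 ⟨s₀, hs₀⟩
  have ht0 : (1 : ℝ) ≤ τ := by exact_mod_cast hτ
  have hC0 : (0 : ℝ) < C.card := by exact_mod_cast card_pos.2 hCne
  have hinc := fun h k hh hk => hI.trans (H.card_incidences_le B C S (h := h) (k := k) hh hk)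
  generalize hYdef : (A.image q + C).card = y at *
  generalize A.card = a at *
  generalize B.card = b at *
  generalize C.card = c at *
  generalize S.card = σ at *
  have hτa : (τ : ℝ) ≤ a := by exact_mod_cast hτA
  have hτb : (τ : ℝ) ≤ b := by exact_mod_cast hτB
  have hay : (a : ℝ) ≤ y := by exact_mod_cast hAY
  have hcy : (c : ℝ) ≤ y := by exact_mod_cast hCY
  have hστ : (σ : ℝ) * τ ≤ a * b := by exact_mod_cast hSτ
  have hinc' : ∀ h k : ℕ, 0 < h → 0 < k →
      (σ : ℝ) * τ * c ≤ b * c * (σ / h + y / k + 1) + σ * y * (h * k) := fun h k hh hk => by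
    have h1 : (σ : ℝ) * τ * c ≤ b * c * ((σ / h : ℕ) + (y / k : ℕ) + 1) + σ * y * (h * k) := by
      exact_mod_cast hinc h k hh hk
    refine h1.trans ?_
    gcongr
    · exact Nat.cast_div_le
    · exact Nat.cast_div_le
  clear hinc hI hSτ hCY hAY hτB hτA hS
  generalize (a : ℝ) = a at *
  generalize (b : ℝ) = b at *
  generalize (c : ℝ) = c at *
  generalize (σ : ℝ) = σ at *
  generalize (y : ℝ) = y at *
  generalize (τ : ℝ) = t at *
  have hb0 : 0 < b := by linarith
  have hy0 : 0 < y := by linarith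
  rcases le_or_gt (t * σ) (8 * b) with hcase | hcase
  · have h1 : t ^ 2 * c ≤ b * y * y := by
      have : t * t ≤ b * y := by gcongr; linarith
      calc t ^ 2 * c = t * t * c := by ring
        _ ≤ b * y * y := by gcongr
    calc σ * t ^ 3 * c = (t * σ) * (t ^ 2 * c) := by ring
      _ ≤ (8 * b) * (b * y * y) := by gcongr
      _ = 8 * (b ^ 2 * y ^ 2) := by ring
      _ ≤ 130 * (b ^ 2 * y ^ 2) := by gcongr; norm_num
      _ = _ := by ring
  · set u := 8 * b / t with hu
    set v := 8 * y * b / (t * σ) with hv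
    have hts : 0 < t * σ := by positivity
    have hu8 : 8 ≤ u := by rw [hu, le_div_iff₀ (by linarith)]; linarith
    have hv8 : 8 ≤ v := by
      rw [hv, le_div_iff₀ hts]
      nlinarith
    have hh0 : 0 < ⌈u⌉₊ := Nat.ceil_pos.2 (by linarith)
    have hk0 : 0 < ⌈v⌉₊ := Nat.ceil_pos.2 (by linarith)
    have hh1 := Nat.le_ceil u
    have hk1 := Nat.le_ceil v
    have hh2 : (⌈u⌉₊ : ℝ) ≤ 9 / 8 * u := by
      linarith [Nat.ceil_lt_add_one (show 0 ≤ u by linarith)]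
    have hk2 : (⌈v⌉₊ : ℝ) ≤ 9 / 8 * v := by
      linarith [Nat.ceil_lt_add_one (show 0 ≤ v by linarith)]
    have key := hinc' _ _ hh0 hk0
    have e1 : σ / (⌈u⌉₊ : ℝ) ≤ t * σ / (8 * b) := by
      calc σ / (⌈u⌉₊ : ℝ) ≤ σ / u := by gcongr
        _ = _ := by rw [hu]; field_simp
    have e2 : y / (⌈v⌉₊ : ℝ) ≤ t * σ / (8 * b) := by
      calc y / (⌈v⌉₊ : ℝ) ≤ y / v := by gcongr
        _ = _ := by rw [hv]; field_simp
    have e3 : 1 ≤ t * σ / (8 * b) := by rw [le_div_iff₀ (by positivity)]; linarith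
    have e4 : b * c * (σ / (⌈u⌉₊ : ℝ) + y / (⌈v⌉₊ : ℝ) + 1) ≤ 3 / 8 * (σ * t * c) := by
      calc _ ≤ b * c * (t * σ / (8 * b) + t * σ / (8 * b) + t * σ / (8 * b)) := by gcongr
        _ = _ := by field_simp; ring
    have e5 : σ * y * ((⌈u⌉₊ : ℝ) * ⌈v⌉₊) ≤ 81 * y ^ 2 * b ^ 2 / t ^ 2 := by
      calc _ ≤ σ * y * ((9 / 8 * u) * (9 / 8 * v)) := by gcongr
        _ = _ := by rw [hu, hv]; field_simp; ring
    have e6 : 5 / 8 * (σ * t * c) ≤ 81 * y ^ 2 * b ^ 2 / t ^ 2 := by linarith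
    rw [le_div_iff₀ (by positivity)] at e6
    have : 0 ≤ b ^ 2 * y ^ 2 := by positivity
    linarith

lemma sum_sum_Ioc_card_level (T : Finset ℝ) (δ : ℝ → ℕ) (g : ℕ → ℝ) {k n : ℕ}
    (hδ : ∀ s ∈ T, δ s ≤ n) :
    ∑ s ∈ T, ∑ τ ∈ Ioc k (δ s), g τ = ∑ τ ∈ Ioc k n, (T.filter (fun s => τ ≤ δ s)).card * g τ := by
  have h1 : ∀ s ∈ T, ∑ τ ∈ Ioc k (δ s), g τ = ∑ τ ∈ Ioc k n, if τ ≤ δ s then g τ else 0 := by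
    intro s hs
    rw [← sum_filter]
    refine sum_congr ?_ fun _ _ => rfl
    ext τ
    have := hδ s hs
    simp only [mem_Ioc, mem_filter]
    omega
  rw [sum_congr rfl h1, sum_comm]
  refine sum_congr rfl fun τ _ => ?_
  rw [← sum_filter, sum_const, nsmul_eq_mul]

lemma cube_le_sum_Ioc_sq (n : ℕ) : (n : ℝ) ^ 3 ≤ ∑ τ ∈ Ioc 0 n, 3 * (τ : ℝ) ^ 2 := by
  induction n with
  | zero => simp
  | succ n ih =>
    rw [sum_Ioc_succ_top (Nat.zero_le n)]
    push_cast
    have : (0 : ℝ) ≤ n := n.cast_nonneg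
    nlinarith

lemma sq_sub_sq_le_sum_Ioc {k n : ℕ} (h : k ≤ n) :
    (n : ℝ) ^ 2 + n - (k ^ 2 + k) ≤ ∑ τ ∈ Ioc k n, 2 * (τ : ℝ) := by
  induction n, h using Nat.le_induction with
  | base => simp
  | succ n hn ih =>
    rw [sum_Ioc_succ_top hn]
    push_cast
    linarith

/-- Third moment of a function whose level sets decay cubically. -/
lemma sum_cube_le_of_level (T : Finset ℝ) (δ : ℝ → ℕ) {n : ℕ} {Q : ℝ} (hδ : ∀ s ∈ T, δ s ≤ n)
    (hQ0 : 0 ≤ Q)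
    (hQ : ∀ τ : ℕ, 1 ≤ τ → ((T.filter (fun s => τ ≤ δ s)).card : ℝ) * τ ^ 3 ≤ Q) :
    ∑ s ∈ T, (δ s : ℝ) ^ 3 ≤ 3 * Q * (1 + Real.log n) := by
  calc ∑ s ∈ T, (δ s : ℝ) ^ 3 ≤ ∑ s ∈ T, ∑ τ ∈ Ioc 0 (δ s), 3 * (τ : ℝ) ^ 2 :=
        sum_le_sum fun s _ => cube_le_sum_Ioc_sq _
    _ = ∑ τ ∈ Ioc 0 n, (T.filter (fun s => τ ≤ δ s)).card * (3 * (τ : ℝ) ^ 2) :=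
        sum_sum_Ioc_card_level T δ (fun τ => 3 * (τ : ℝ) ^ 2) hδ
    _ ≤ ∑ τ ∈ Ioc 0 n, 3 * Q * (τ : ℝ)⁻¹ := by
        refine sum_le_sum fun τ hτ => ?_
        have hτ1 : 1 ≤ τ := by simp only [mem_Ioc] at hτ; omega
        have hτ0 : (0 : ℝ) < τ := by exact_mod_cast hτ1
        rw [← div_eq_mul_inv, le_div_iff₀ hτ0]
        linarith [hQ τ hτ1]
    _ ≤ 3 * Q * (1 + Real.log n) := by
        rw [← mul_sum]
        gcongr
        refine le_of_eq_of_le ?_ (harmonic_le_one_add_log n)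
        rw [harmonic_eq_sum_Icc]
        push_cast
        rfl

/-- Second moment of a function whose level sets decay cubically, split at the height `Δ`. -/
lemma sum_sq_le_of_level (T : Finset ℝ) (δ : ℝ → ℕ) (w : ℝ → ℝ) {Q Δ : ℝ} (hΔ : 0 < Δ)
    (hQ0 : 0 ≤ Q) (hw : ∀ s ∈ T, min (δ s : ℝ) Δ ^ 2 ≤ w s)
    (hQ : ∀ τ : ℕ, 1 ≤ τ → ((T.filter (fun s => τ ≤ δ s)).card : ℝ) * τ ^ 3 ≤ Q) :
    ∑ s ∈ T, (δ s : ℝ) ^ 2 ≤ ∑ s ∈ T, w s + 4 * Q / Δ := by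
  set n := T.sup δ
  set k := ⌊Δ⌋₊ with hk
  have hδ : ∀ s ∈ T, δ s ≤ n := fun s hs => le_sup hs
  have hkΔ : (k : ℝ) ≤ Δ := Nat.floor_le hΔ.le
  have hΔk : Δ < k + 1 := Nat.lt_floor_add_one Δ
  have h1 : ∀ s ∈ T, (δ s : ℝ) ^ 2 ≤ w s + ∑ τ ∈ Ioc k (δ s), 2 * (τ : ℝ) := by
    intro s hs
    refine le_trans ?_ (add_le_add_left (hw s hs) _)
    rcases le_or_gt (δ s : ℝ) Δ with h | h
    · rw [min_eq_left h]
      have : 0 ≤ ∑ τ ∈ Ioc k (δ s), 2 * (τ : ℝ) := sum_nonneg fun _ _ => by positivity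
      linarith
    · rw [min_eq_right h.le]
      have hkd : k ≤ δ s := by exact_mod_cast hkΔ.trans h.le
      have := sq_sub_sq_le_sum_Ioc hkd
      have : (k : ℝ) ^ 2 ≤ Δ ^ 2 := by gcongr
      linarith
  calc ∑ s ∈ T, (δ s : ℝ) ^ 2 ≤ ∑ s ∈ T, (w s + ∑ τ ∈ Ioc k (δ s), 2 * (τ : ℝ)) :=
        sum_le_sum h1
    _ = ∑ s ∈ T, w s + ∑ τ ∈ Ioc k n, (T.filter (fun s => τ ≤ δ s)).card * (2 * (τ : ℝ)) := by
        rw [sum_add_distrib, sum_sum_Ioc_card_level T δ (fun τ => 2 * (τ : ℝ)) hδ]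
    _ ≤ ∑ s ∈ T, w s + ∑ τ ∈ Ioc k n, 2 * Q * ((τ : ℝ) ^ 2)⁻¹ := by
        refine add_le_add le_rfl (sum_le_sum fun τ hτ => ?_)
        have hτ1 : 1 ≤ τ := by simp only [mem_Ioc] at hτ; omega
        have hτ0 : (0 : ℝ) < τ := by exact_mod_cast hτ1
        rw [← div_eq_mul_inv, le_div_iff₀ (by positivity)]
        linarith [hQ τ hτ1]
    _ ≤ ∑ s ∈ T, w s + 4 * Q / Δ := by
        rw [← mul_sum]
        have h2 : ∑ τ ∈ Ioc k n, ((τ : ℝ) ^ 2)⁻¹ ≤ 2 / (k + 1) := by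
          refine le_of_eq_of_le ?_ (sum_Ioo_inv_sq_le (α := ℝ) k (n + 1))
          refine sum_congr ?_ fun _ _ => rfl
          ext τ
          simp only [mem_Ioc, mem_Ioo]
          omega
        have h3 : (2 : ℝ) / (k + 1) ≤ 2 / Δ := by gcongr
        calc _ ≤ ∑ s ∈ T, w s + 2 * Q * (2 / Δ) := by gcongr; exact h2.trans h3
          _ = _ := by ring

lemma dlt_eq_zero {X Y : Finset ℝ} {s : ℝ} (hs : s ∉ X - Y) : dlt X Y s = 0 := by
  rw [dlt, card_eq_zero, filter_eq_empty_iff]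
  rintro ⟨a, b⟩ hab rfl
  rw [mem_product] at hab
  exact hs (sub_mem_sub hab.1 hab.2)

lemma dlt_mul_dlt_eq (X Y : Finset ℝ) (s : ℝ) :
    dlt X X s * dlt Y Y s = (((X ×ˢ X) ×ˢ (Y ×ˢ Y)).filter (fun x =>
      x.1.1 - x.1.2 = s ∧ x.2.1 - x.2.2 = s)).card := by
  rw [dlt, dlt, ← card_product]
  congr 1
  ext ⟨x, y⟩
  simp only [mem_product, mem_filter]
  tauto

lemma addEnergy_eq_sum_dlt_mul_dlt {X Y T : Finset ℝ} (hT : X - X ⊆ T) :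
    X.addEnergy Y = ∑ s ∈ T, dlt X X s * dlt Y Y s := by
  rw [addEnergy, card_eq_sum_card_fiberwise (f := fun x => x.1.1 - x.1.2) (t := T)]
  · refine sum_congr rfl fun s _ => ?_
    rw [dlt_mul_dlt_eq]
    refine card_bij (fun x _ => (x.1, x.2.swap)) ?_ ?_ ?_
    · rintro ⟨⟨a, b⟩, c, d⟩
      simp only [mem_filter, mem_product, Prod.swap]
      rintro ⟨⟨⟨h1, h2⟩, h3⟩, h4⟩
      exact ⟨⟨h1, h2.2, h2.1⟩, h4, by linarith⟩
    · rintro ⟨⟨a, b⟩, c, d⟩ - ⟨⟨a', b'⟩, c', d'⟩ - h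
      simp only [Prod.swap, Prod.mk.injEq] at h ⊢
      tauto
    · rintro ⟨⟨a, b⟩, c, d⟩
      simp only [mem_filter, mem_product, Prod.swap]
      rintro ⟨⟨h1, h2⟩, h3, h4⟩
      exact ⟨((a, b), (d, c)), ⟨⟨⟨h1, h2.2, h2.1⟩, by linarith⟩, h3⟩, rfl⟩
  · intro x hx
    simp only [coe_filter, mem_product, Set.mem_ofPred_eq] at hx
    exact hT (sub_mem_sub hx.1.1.1 hx.1.1.2)

lemma sum_dlt_mul_dlt_le_addEnergy (X Y T : Finset ℝ) :
    ∑ s ∈ T, dlt X X s * dlt Y Y s ≤ X.addEnergy Y := by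
  rw [addEnergy_eq_sum_dlt_mul_dlt (X := X) (Y := Y) (T := T ∪ (X - X)) subset_union_right]
  exact sum_le_sum_of_subset subset_union_left

lemma addEnergy_eq_sum_dlt_sq (X Y : Finset ℝ) :
    X.addEnergy Y = ∑ s ∈ X - Y, dlt X Y s ^ 2 := by
  rw [addEnergy, card_eq_sum_card_fiberwise (f := fun x => x.1.1 - x.2.2) (t := X - Y)]
  · refine sum_congr rfl fun s _ => ?_
    rw [sq, dlt, ← card_product]
    refine card_bij (fun x _ => ((x.1.1, x.2.2), (x.1.2, x.2.1))) ?_ ?_ ?_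
    · rintro ⟨⟨a, b⟩, c, d⟩
      simp only [mem_filter, mem_product]
      rintro ⟨⟨⟨h1, h2⟩, h3⟩, h4⟩
      exact ⟨⟨⟨h1.1, h2.2⟩, h4⟩, ⟨h1.2, h2.1⟩, by linarith⟩
    · rintro ⟨⟨a, b⟩, c, d⟩ - ⟨⟨a', b'⟩, c', d'⟩ - h
      simp only [Prod.mk.injEq] at h ⊢
      tauto
    · rintro ⟨⟨a, b⟩, c, d⟩
      simp only [mem_filter, mem_product]
      rintro ⟨⟨h1, h2⟩, h3, h4⟩
      exact ⟨((a, c), (d, b)), ⟨⟨⟨⟨h1.1, h3.1⟩, h3.2, h1.2⟩, by linarith⟩, h2⟩, rfl⟩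
  · intro x hx
    simp only [coe_filter, mem_product, Set.mem_ofPred_eq] at hx
    exact sub_mem_sub hx.1.1.1 hx.1.2.2

/-- The set of `x ∈ X` with `x - s ∈ X`. -/
noncomputable def popularPart (X : Finset ℝ) (s : ℝ) : Finset ℝ := X.filter (fun x => x - s ∈ X)

lemma card_popularPart (X : Finset ℝ) (s : ℝ) : (popularPart X s).card = dlt X X s := by
  refine card_bij (fun x _ => (x, x - s)) ?_ ?_ ?_
  · simp [popularPart]
  · simp
  · rintro ⟨a, b⟩ h
    simp only [mem_filter, mem_product, popularPart, Prod.mk.injEq] at h ⊢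
    obtain ⟨⟨h1, h2⟩, h3⟩ := h
    exact ⟨a, ⟨h1, by rwa [show a - s = b by linarith]⟩, rfl, by linarith⟩

lemma card_popularPart_add_le (X Y : Finset ℝ) (s : ℝ) :
    (popularPart X s + Y).card ≤ dlt (X + Y) (X + Y) s := by
  rw [← card_popularPart]
  refine card_le_card fun z hz => ?_
  obtain ⟨x, hx, y, hy, rfl⟩ := mem_add.1 hz
  rw [popularPart, mem_filter] at hx ⊢
  refine ⟨add_mem_add hx.1 hy, ?_⟩
  rw [show x + y - s = x - s + y by ring]
  exact add_mem_add hx.2 hy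

lemma sum_dlt_popularPart_le (X T : Finset ℝ) (u : ℝ) :
    ∑ s ∈ T, dlt (popularPart X s) (popularPart X s) u ≤ dlt X X u ^ 2 := by
  simp only [dlt]
  rw [sq, ← card_product, ← card_sigma]
  refine card_le_card_of_injOn (fun x => (x.2, (x.2.1 - x.1, x.2.2 - x.1))) ?_ ?_
  · rintro ⟨s, a, b⟩ hx
    simp only [mem_coe, mem_sigma, mem_filter, mem_product, popularPart] at hx ⊢
    obtain ⟨-, ⟨⟨h1, h2⟩, h3, h4⟩, h5⟩ := hx
    exact ⟨⟨⟨h1, h3⟩, h5⟩, ⟨h2, h4⟩, by linarith⟩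
  · rintro ⟨s, a, b⟩ - ⟨s', a', b'⟩ - h
    simp only [Prod.mk.injEq] at h
    obtain ⟨⟨rfl, rfl⟩, h, -⟩ := h
    obtain rfl : s = s' := by linarith
    rfl

lemma sum_addEnergy_popularPart_le (X Y T : Finset ℝ) :
    ∑ s ∈ T, (popularPart X s).addEnergy Y ≤ ∑ u ∈ X - X, dlt X X u ^ 2 * dlt Y Y u := by
  have h : ∀ s, (popularPart X s).addEnergy Y =
      ∑ u ∈ X - X, dlt (popularPart X s) (popularPart X s) u * dlt Y Y u := fun s =>
    addEnergy_eq_sum_dlt_mul_dlt (sub_subset_sub (filter_subset _ _) (filter_subset _ _))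
  simp_rw [h]
  rw [sum_comm]
  refine sum_le_sum fun u _ => ?_
  rw [← sum_mul]
  exact Nat.mul_le_mul_right _ (sum_dlt_popularPart_le X T u)

/-- The `3/2`-moment inequality relating a set to its sum with another set. -/
lemma card_mul_sum_dlt_mul_sqrt_sq_le (X Y T : Finset ℝ) :
    (Y.card * ∑ s ∈ T, (dlt X X s : ℝ) * √(dlt X X s)) ^ 2 ≤
      X.addEnergy (X + Y) * ∑ u ∈ X - X, (dlt X X u : ℝ) ^ 2 * dlt Y Y u := by
  have hpt : ∀ s, (Y.card : ℝ) * (dlt X X s * √(dlt X X s)) ≤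
      √((dlt X X s : ℝ) * dlt (X + Y) (X + Y) s) * √((popularPart X s).addEnergy Y) := by
    intro s
    rw [← Real.sqrt_mul (by positivity)]
    apply Real.le_sqrt_of_sq_le
    have h1 := le_card_add_mul_addEnergy (popularPart X s) Y
    have h2 := h1.trans (Nat.mul_le_mul_right _ (card_popularPart_add_le X Y s))
    rw [card_popularPart] at h2
    have h3 : (dlt X X s : ℝ) ^ 2 * Y.card ^ 2 ≤
      dlt (X + Y) (X + Y) s * (popularPart X s).addEnergy Y := by exact_mod_cast h2
    rw [mul_pow, mul_pow, Real.sq_sqrt (Nat.cast_nonneg _)]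
    calc _ = dlt X X s * ((dlt X X s : ℝ) ^ 2 * Y.card ^ 2) := by ring
      _ ≤ dlt X X s * (dlt (X + Y) (X + Y) s * (popularPart X s).addEnergy Y) := by gcongr
      _ = _ := by ring
  have h1 : (∑ s ∈ T, (dlt X X s : ℝ) * dlt (X + Y) (X + Y) s) ≤ X.addEnergy (X + Y) := by
    exact_mod_cast sum_dlt_mul_dlt_le_addEnergy X (X + Y) T
  have h2 : (∑ s ∈ T, ((popularPart X s).addEnergy Y : ℝ)) ≤
      ∑ u ∈ X - X, (dlt X X u : ℝ) ^ 2 * dlt Y Y u := by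
    exact_mod_cast sum_addEnergy_popularPart_le X Y T
  calc _ ≤ (∑ s ∈ T, √((dlt X X s : ℝ) * dlt (X + Y) (X + Y) s) *
        √((popularPart X s).addEnergy Y)) ^ 2 := by
        refine pow_le_pow_left₀ (by positivity) ?_ 2
        rw [mul_sum]
        exact sum_le_sum fun s _ => hpt s
    _ ≤ (∑ s ∈ T, √((dlt X X s : ℝ) * dlt (X + Y) (X + Y) s) ^ 2) *
        ∑ s ∈ T, √((popularPart X s).addEnergy Y : ℝ) ^ 2 :=
        sum_mul_sq_le_sq_mul_sq T (fun s => √((dlt X X s : ℝ) * dlt (X + Y) (X + Y) s))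
          (fun s => √((popularPart X s).addEnergy Y : ℝ))
    _ = (∑ s ∈ T, (dlt X X s : ℝ) * dlt (X + Y) (X + Y) s) *
        ∑ s ∈ T, ((popularPart X s).addEnergy Y : ℝ) := by
        congr 1
        · exact sum_congr rfl fun s _ => Real.sq_sqrt (by positivity)
        · exact sum_congr rfl fun s _ => Real.sq_sqrt (by positivity)
    _ ≤ _ := mul_le_mul h1 h2 (sum_nonneg fun _ _ => Nat.cast_nonneg _) (Nat.cast_nonneg _)

section SidonChain

variable {A : Finset ℝ} {p q : ℝ → ℝ}

lemma IsSidonChain.card_level_le (H : IsSidonChain A p q) (hA : A.Nonempty) (B T : Finset ℝ)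
    {τ : ℕ} (hτ : 1 ≤ τ) :
    ((T.filter (fun s => τ ≤ dlt (A.image p) B s)).card : ℝ) * τ ^ 3 ≤
      130 * B.card ^ 2 * ((A.image p + A.image q).card : ℝ) ^ 2 / A.card := by
  have hA0 : (0 : ℝ) < A.card := by exact_mod_cast card_pos.2 hA
  rw [le_div_iff₀ hA0]
  have := H.card_rich_mul_le hA B (A.image p) (T.filter (fun s => τ ≤ dlt (A.image p) B s)) hτ
    fun s hs => (mem_filter.1 hs).2
  rwa [card_image_of_injOn H.injOn_left, add_comm (A.image q)] at this

lemma IsSidonChain.sum_dlt_cube_le (H : IsSidonChain A p q) (hA : A.Nonempty) (T : Finset ℝ) :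
    ∑ s ∈ T, (dlt (A.image p) (A.image p) s : ℝ) ^ 3 ≤
      390 * A.card * ((A.image p + A.image q).card : ℝ) ^ 2 * (1 + Real.log A.card) := by
  have hA0 : (0 : ℝ) < A.card := by exact_mod_cast card_pos.2 hA
  have hU : (A.image p).card = A.card := card_image_of_injOn H.injOn_left
  refine (sum_cube_le_of_level T _ (n := A.card) (fun s _ => hU ▸ dlt_le_card_left_s15 _ _ s)
    (by positivity) fun τ hτ => H.card_level_le hA _ T hτ).trans_eq ?_
  rw [hU]
  field_simp
  ring

lemma IsSidonChain.addEnergy_add_le (H : IsSidonChain A p q) (hA : A.Nonempty) {m : ℝ}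
    (hm : 0 < m) (hmM : m ^ 2 = (A.image p + A.image q).card) :
    ((A.image p).addEnergy (A.image p + A.image q) : ℝ) ≤ 521 * m ^ 5 := by
  have hA0 : (0 : ℝ) < A.card := by exact_mod_cast card_pos.2 hA
  have hU : (A.image p).card = A.card := card_image_of_injOn H.injOn_left
  set U := A.image p with hUdef
  set D := U + A.image q with hD
  have hsum : ∑ s ∈ U - D, (dlt U D s : ℝ) ≤ A.card * m ^ 2 := by
    rw [hmM, ← hU]
    exact_mod_cast sum_dlt_le_s15 U D (U - D)
  set Δ : ℝ := m ^ 3 / A.card with hΔ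
  have hΔ0 : 0 < Δ := by positivity
  have h := sum_sq_le_of_level (U - D) (fun s => dlt U D s) (fun s => Δ * dlt U D s) hΔ0
    (Q := 130 * D.card ^ 2 * (D.card : ℝ) ^ 2 / A.card) (by positivity)
    (fun s _ => by
      rw [sq, mul_comm]
      exact mul_le_mul (min_le_right _ _) (min_le_left _ _) (by positivity) hΔ0.le)
    (fun τ hτ => H.card_level_le hA D (U - D) hτ)
  rw [← mul_sum] at h
  rw [addEnergy_eq_sum_dlt_sq]
  push_cast
  calc _ ≤ _ := h
    _ ≤ Δ * (A.card * m ^ 2) + 4 * (130 * D.card ^ 2 * (D.card : ℝ) ^ 2 / A.card) / Δ := by gcongr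
    _ = 521 * m ^ 5 := by
      rw [← hmM, hΔ]
      field_simp
      ring

lemma IsSidonChain.sum_dlt_sq_le (H : IsSidonChain A p q) (hA : A.Nonempty) (T : Finset ℝ)
    {n m l : ℝ} (hn : 0 < n) (hm : 0 < m) (hl : 0 < l) (hnN : n ^ 2 = A.card)
    (hmM : m ^ 12 = (A.image p + A.image q).card) (hlL : l ^ 6 = 1 + Real.log A.card) :
    ∑ s ∈ T, (dlt (A.image p) (A.image p) s : ℝ) ^ 2 ≤ 1158 * m ^ 26 * l ^ 2 := by
  have hU : (A.image p).card = A.card := card_image_of_injOn H.injOn_left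
  have hV : (A.image q).card = A.card := card_image_of_injOn H.injOn_right
  set U := A.image p with hUdef
  set V := A.image q with hVdef
  have hcubeU : ∑ s ∈ U - U, (dlt U U s : ℝ) ^ 3 ≤ 390 * n ^ 2 * m ^ 24 * l ^ 6 := by
    refine (H.sum_dlt_cube_le hA (U - U)).trans_eq ?_
    rw [← hmM, ← hlL, ← hnN]
    ring
  have hcubeV : ∑ s ∈ U - U, (dlt V V s : ℝ) ^ 3 ≤ 390 * n ^ 2 * m ^ 24 * l ^ 6 := by
    refine (H.symm.sum_dlt_cube_le hA (U - U)).trans_eq ?_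
    rw [← hVdef, ← hUdef, add_comm V U, ← hmM, ← hlL, ← hnN]
    ring
  have hmixed : ∑ u ∈ U - U, (dlt U U u : ℝ) ^ 2 * dlt V V u ≤ 780 * n ^ 2 * m ^ 24 * l ^ 6 := by
    calc _ ≤ ∑ u ∈ U - U, ((dlt U U u : ℝ) ^ 3 + (dlt V V u : ℝ) ^ 3) := by
          refine sum_le_sum fun u _ => ?_
          generalize hx : (dlt U U u : ℝ) = x
          generalize hy : (dlt V V u : ℝ) = y
          have hx0 : 0 ≤ x := hx ▸ Nat.cast_nonneg _
          have hy0 : 0 ≤ y := hy ▸ Nat.cast_nonneg _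
          rcases le_total x y with h | h
          · have : x ^ 2 * y ≤ y ^ 2 * y := by gcongr
            have : 0 ≤ x ^ 3 := by positivity
            linarith
          · have : x ^ 2 * y ≤ x ^ 2 * x := by gcongr
            have : 0 ≤ y ^ 3 := by positivity
            linarith
      _ ≤ _ := by rw [sum_add_distrib]; linarith
  have hen : (U.addEnergy (U + V) : ℝ) ≤ 521 * m ^ 30 := by
    refine (H.addEnergy_add_le hA (m := m ^ 6) (by positivity) ?_).trans_eq (by ring)
    rw [← hmM]
    ring
  have hmoment : ∑ s ∈ T, (dlt U U s : ℝ) * √(dlt U U s) ≤ 638 * m ^ 27 * l ^ 3 / n := by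
    have h1 := card_mul_sum_dlt_mul_sqrt_sq_le U V T
    have h2 : (n ^ 2 * ∑ s ∈ T, (dlt U U s : ℝ) * √(dlt U U s)) ^ 2 ≤
        (638 * m ^ 27 * l ^ 3 * n) ^ 2 := by
      rw [hnN, ← hV]
      calc _ ≤ _ := h1
        _ ≤ (521 * m ^ 30) * (780 * n ^ 2 * m ^ 24 * l ^ 6) := by gcongr
        _ = 406380 * (m ^ 54 * l ^ 6 * n ^ 2) := by ring
        _ ≤ 407044 * (m ^ 54 * l ^ 6 * n ^ 2) := by gcongr; norm_num
        _ = _ := by ring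
    have h3 := le_of_sq_le_sq h2 (by positivity)
    rw [le_div_iff₀ hn]
    refine le_of_mul_le_mul_left ?_ hn
    linarith
  set d : ℝ := n / (m * l) with hd
  have hd0 : 0 < d := by positivity
  have h := sum_sq_le_of_level T (fun s => dlt U U s)
    (fun s => d * ((dlt U U s : ℝ) * √(dlt U U s))) (Δ := d ^ 2) (by positivity)
    (Q := 130 * U.card ^ 2 * ((U + V).card : ℝ) ^ 2 / A.card) (by positivity)
    (fun s _ => by
      have hx0 : (0 : ℝ) ≤ dlt U U s := Nat.cast_nonneg _
      generalize (dlt U U s : ℝ) = x at *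
      obtain ⟨y, hy, rfl⟩ : ∃ y, 0 ≤ y ∧ y ^ 2 = x := ⟨√x, Real.sqrt_nonneg _, Real.sq_sqrt hx0⟩
      rw [Real.sqrt_sq hy]
      rcases le_total y d with hyd | hyd
      · rw [min_eq_left (by gcongr)]
        calc (y ^ 2) ^ 2 = y * (y ^ 2 * y) := by ring
          _ ≤ _ := by gcongr
      · rw [min_eq_right (by gcongr)]
        calc (d ^ 2) ^ 2 = d * (d ^ 2 * d) := by ring
          _ ≤ _ := by gcongr)
    (fun τ hτ => H.card_level_le hA U T hτ)
  rw [← mul_sum] at h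
  calc _ ≤ _ := h
    _ ≤ d * (638 * m ^ 27 * l ^ 3 / n) +
        4 * (130 * U.card ^ 2 * ((U + V).card : ℝ) ^ 2 / A.card) / d ^ 2 := by gcongr
    _ = _ := by
      rw [hU, ← hmM, ← hnN, hd]
      field_simp
      ring

lemma IsSidonChain.card_pow_le (H : IsSidonChain A p q) (hA : A.Nonempty) :
    (A.card : ℝ) ^ 24 ≤ 2316 ^ 6 * ((A.image p + A.image q).card : ℝ) ^ 19 *
      (1 + Real.log A.card) ^ 2 := by
  have hU : (A.image p).card = A.card := card_image_of_injOn H.injOn_left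
  have hV : (A.image q).card = A.card := card_image_of_injOn H.injOn_right
  have hA1 : (1 : ℝ) ≤ A.card := by exact_mod_cast card_pos.2 hA
  have hM0 : (0 : ℝ) < (A.image p + A.image q).card := by
    exact_mod_cast card_pos.2 ((hA.image p).add (hA.image q))
  have hL0 : 0 < 1 + Real.log A.card := by linarith [Real.log_nonneg hA1]
  have hroot : ∀ x : ℝ, 0 < x → ∀ k : ℕ, k ≠ 0 → ∃ y : ℝ, 0 < y ∧ y ^ k = x := fun x hx k hk =>
    ⟨x ^ (k⁻¹ : ℝ), by positivity, Real.rpow_inv_natCast_pow hx.le hk⟩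
  obtain ⟨n, hn, hnN⟩ := hroot A.card (by linarith) 2 (by norm_num)
  obtain ⟨m, hm, hmM⟩ := hroot _ hM0 12 (by norm_num)
  obtain ⟨l, hl, hlL⟩ := hroot _ hL0 6 (by norm_num)
  have h1 := H.sum_dlt_sq_le hA (A.image p - A.image p) hn hm hl hnN hmM hlL
  have h2 := H.symm.sum_dlt_sq_le hA (A.image p - A.image p) hn hm hl hnN
    (by rw [hmM, add_comm]) hlL
  have h3 : ((A.image p).addEnergy (A.image q) : ℝ) ≤ 2316 * m ^ 26 * l ^ 2 := by
    rw [addEnergy_eq_sum_dlt_mul_dlt (Subset.refl _)]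
    push_cast
    calc _ ≤ ∑ s ∈ A.image p - A.image p, ((dlt (A.image p) (A.image p) s : ℝ) ^ 2 +
          (dlt (A.image q) (A.image q) s : ℝ) ^ 2) := by
          refine sum_le_sum fun s _ => ?_
          nlinarith [sq_nonneg ((dlt (A.image p) (A.image p) s : ℝ) -
            dlt (A.image q) (A.image q) s), mul_nonneg (Nat.cast_nonneg (α := ℝ)
            (dlt (A.image p) (A.image p) s)) (Nat.cast_nonneg (α := ℝ)
            (dlt (A.image q) (A.image q) s))]
      _ ≤ _ := by rw [sum_add_distrib]; linarith
  have h4 : (A.card : ℝ) ^ 2 * A.card ^ 2 ≤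
      (A.image p + A.image q).card * (A.image p).addEnergy (A.image q) := by
    have := le_card_add_mul_addEnergy (A.image p) (A.image q)
    rw [hU, hV] at this
    exact_mod_cast this
  have h5 : n ^ 8 ≤ 2316 * m ^ 38 * l ^ 2 := by
    calc n ^ 8 = (A.card : ℝ) ^ 2 * A.card ^ 2 := by rw [← hnN]; ring
      _ ≤ _ := h4
      _ ≤ m ^ 12 * (2316 * m ^ 26 * l ^ 2) := by rw [← hmM]; gcongr
      _ = _ := by ring
  calc (A.card : ℝ) ^ 24 = (n ^ 8) ^ 6 := by rw [← hnN]; ring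
    _ ≤ (2316 * m ^ 38 * l ^ 2) ^ 6 := by gcongr
    _ = _ := by rw [← hmM, ← hlL]; ring

end SidonChain

section Convex

variable {f : ℝ → ℝ}

lemma StrictConvexOn.add_sub_lt_add_sub (hf : StrictConvexOn ℝ Set.univ f) {x y h : ℝ}
    (hxy : x < y) (hh : 0 < h) : f (x + h) - f x < f (y + h) - f y := by
  set t := h / (y - x + h) with ht
  have hd : 0 < y - x + h := by linarith
  have ht0 : 0 < t := by positivity
  have ht1 : 0 < 1 - t := by
    rw [ht, sub_pos, div_lt_one hd]
    linarith
  have htd : t * (y - x + h) = h := by rw [ht]; field_simp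
  have hne : x ≠ y + h := by linarith
  have h1 := hf.2 (Set.mem_univ x) (Set.mem_univ (y + h)) hne ht1 ht0 (by ring)
  have h2 := hf.2 (Set.mem_univ x) (Set.mem_univ (y + h)) hne ht0 ht1 (by ring)
  simp only [smul_eq_mul] at h1 h2
  rw [show (1 - t) * x + t * (y + h) = x + h by linear_combination htd] at h1
  rw [show t * x + (1 - t) * (y + h) = y by linear_combination -htd] at h2
  linarith

lemma StrictConvexOn.eq_of_sub_eq_sub (hf : StrictConvexOn ℝ Set.univ f) {a b a' b' : ℝ}
    (hab : a ≠ b) (h1 : a - b = a' - b') (h2 : f a - f b = f a' - f b') : a = a' := by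
  have key : ∀ {c d c' d' : ℝ}, c < d → c - d = c' - d' → f c - f d = f c' - f d' → c = c' := by
    intro c d c' d' hcd h1 h2
    have e1 : d = c + (d - c) := by ring
    have e2 : d' = c' + (d - c) := by linarith
    rcases lt_trichotomy c c' with h | h | h
    · have := hf.add_sub_lt_add_sub h (sub_pos.2 hcd)
      rw [← e1, ← e2] at this
      linarith
    · exact h
    · have := hf.add_sub_lt_add_sub h (sub_pos.2 hcd)
      rw [← e1, ← e2] at this
      linarith
  rcases lt_or_gt_of_ne hab with h | h
  · exact key h h1 h2
  · linarith [key h (by linarith) (by linarith : f b - f a = f b' - f a')]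

lemma StrictConvexOn.isSidonChain (hf : StrictConvexOn ℝ Set.univ f) {A : Finset ℝ}
    (hA : StrictMonoOn f A ∨ StrictAntiOn f A) : IsSidonChain A id f where
  injOn_left := Function.injective_id.injOn
  injOn_right := hA.elim StrictMonoOn.injOn StrictAntiOn.injOn
  vary := hA.imp (fun h _ ha _ hb hab => (h ha hb hab).le) fun h _ ha _ hb hab => (h ha hb hab).le
  sidon _ _ _ _ _ _ _ _ := hf.eq_of_sub_eq_sub

/-- Half of a finite set lies on one branch of a strictly convex function. -/
lemma StrictConvexOn.exists_large_strictMonoOn_or_strictAntiOn (hf : StrictConvexOn ℝ Set.univ f)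
    (A : Finset ℝ) :
    ∃ B ⊆ A, A.card ≤ 2 * B.card ∧ (StrictMonoOn f B ∨ StrictAntiOn f B) := by
  classical
  set P : ℝ → Prop := fun x => ∃ y > x, f y ≤ f x
  have hanti : StrictAntiOn f {x | P x} := by
    rintro x - z ⟨y, hzy, hy⟩ hxz
    by_contra! hle
    have h1 := hf.lt_on_openSegment (Set.mem_univ x) (Set.mem_univ y) (by linarith : x ≠ y)
      (by rw [openSegment_eq_Ioo (hxz.trans hzy)]; exact ⟨hxz, hzy⟩ : z ∈ openSegment ℝ x y)
    rcases lt_max_iff.1 h1 with h | h <;> linarith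
  have hmono : StrictMonoOn f {x | ¬ P x} := by
    intro x hx z _ hxz
    by_contra! hle
    exact hx ⟨z, hxz, hle⟩
  have hcard := card_filter_add_card_filter_not (s := A) P
  rcases le_total (A.filter P).card (A.filter (fun x => ¬ P x)).card with h | h
  · exact ⟨A.filter (fun x => ¬ P x), filter_subset _ _, by omega,
      Or.inl (hmono.mono fun x hx => (mem_filter.1 hx).2)⟩
  · exact ⟨A.filter P, filter_subset _ _, by omega,
      Or.inr (hanti.mono fun x hx => (mem_filter.1 hx).2)⟩

lemma StrictConvexOn.card_pow_le (hf : StrictConvexOn ℝ Set.univ f) {A : Finset ℝ}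
    (hA : 2 ≤ A.card) :
    (A.card : ℝ) ^ 24 ≤ (2 ^ 24 * 2316 ^ 6 * 9) * ((A + A.image f).card : ℝ) ^ 19 *
      Real.log A.card ^ 2 := by
  obtain ⟨B, hBA, hcard, hB⟩ := hf.exists_large_strictMonoOn_or_strictAntiOn A
  have hB1 : 1 ≤ B.card := by omega
  have h := (hf.isSidonChain hB).card_pow_le (card_pos.1 hB1)
  rw [image_id] at h
  have hB0 : (1 : ℝ) ≤ B.card := by exact_mod_cast hB1
  have hA2 : (2 : ℝ) ≤ A.card := by exact_mod_cast hA
  have hsum : ((B + B.image f).card : ℝ) ≤ (A + A.image f).card := by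
    exact_mod_cast card_le_card (add_subset_add hBA (image_subset_image hBA))
  have hlog : 1 + Real.log B.card ≤ 3 * Real.log A.card := by
    have h1 : Real.log B.card ≤ Real.log A.card :=
      Real.log_le_log (by linarith) (by exact_mod_cast card_le_card hBA)
    have h2 : Real.log 2 ≤ Real.log A.card := Real.log_le_log (by norm_num) hA2
    linarith [Real.log_two_gt_d9]
  have hlog0 : 0 ≤ Real.log B.card := Real.log_nonneg hB0
  have hc : (A.card : ℝ) ≤ 2 * B.card := by exact_mod_cast hcard
  calc (A.card : ℝ) ^ 24 ≤ (2 * B.card) ^ 24 := by gcongr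
    _ = 2 ^ 24 * (B.card : ℝ) ^ 24 := by ring
    _ ≤ 2 ^ 24 * (2316 ^ 6 * ((A + A.image f).card : ℝ) ^ 19 * (3 * Real.log A.card) ^ 2) := by
      gcongr
      refine h.trans ?_
      gcongr
    _ = _ := by ring

end Convex

theorem stmt15 : ∃ K : ℝ, 0 < K ∧
    ∀ f : ℝ → ℝ, Continuous f → StrictConvexOn ℝ Set.univ f →
    ∀ A : Finset ℝ, 2 ≤ A.card →
    ((A + A.image f).card : ℝ) ≥
      K * (A.card : ℝ) ^ ((24 : ℝ) / 19) / (Real.log A.card) ^ ((2 : ℝ) / 19) := by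
  refine ⟨((2 ^ 24 * 2316 ^ 6 * 9 : ℝ) ^ ((1 : ℝ) / 19))⁻¹, by positivity, fun f _ hf A hA => ?_⟩
  have h := hf.card_pow_le hA
  have hc : (0 : ℝ) < 2 ^ 24 * 2316 ^ 6 * 9 := by norm_num
  have hA2 : (2 : ℝ) ≤ A.card := by exact_mod_cast hA
  have hl : 0 < Real.log A.card := Real.log_pos (by linarith)
  generalize (2 ^ 24 * 2316 ^ 6 * 9 : ℝ) = c at *
  have hN : (0 : ℝ) ≤ A.card := Nat.cast_nonneg _
  have hM : (0 : ℝ) ≤ (A + A.image f).card := Nat.cast_nonneg _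
  have h1 := Real.rpow_le_rpow (by positivity) h (by norm_num : (0 : ℝ) ≤ 1 / 19)
  rw [Real.mul_rpow (by positivity) (by positivity), Real.mul_rpow hc.le (by positivity),
    ← Real.rpow_natCast, ← Real.rpow_natCast, ← Real.rpow_natCast, ← Real.rpow_mul hN,
    ← Real.rpow_mul hM, ← Real.rpow_mul hl.le] at h1
  norm_num at h1
  rw [ge_iff_le, div_le_iff₀ (by positivity), inv_mul_le_iff₀ (by positivity), ← mul_assoc]
  exact h1
end

section
/- There exists an absolute constant K such that for every finite set A of positive real numbers with |A| ≥ 2, one has max(|A·A|, |A−A|) ≥ K · |A|^{14/11} / (log|A|)^{2/11}. -/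
open Finset Pointwise

/-- The number of representations of `x` as `a - b` with `a ∈ A` and `b ∈ B`. -/
noncomputable def subRep (A B : Finset ℝ) (x : ℝ) : ℕ := #{a ∈ A | a - x ∈ B}

/-- Cauchy–Schwarz lower bound for the number of collisions of a map. -/
theorem card_sq_le_card_mul_card_collisions {α β : Type*} [DecidableEq β] {T : Finset α}
    {W : Finset β} {φ : α → β} (h : ∀ x ∈ T, φ x ∈ W) :
    #T ^ 2 ≤ #W * #{x ∈ T ×ˢ T | φ x.1 = φ x.2} := by
  have h₁ : #T = ∑ w ∈ W, #{x ∈ T | φ x = w} := card_eq_sum_card_fiberwise h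
  have h₂ : #{x ∈ T ×ˢ T | φ x.1 = φ x.2} = ∑ w ∈ W, #{x ∈ T | φ x = w} ^ 2 := by
    rw [card_eq_sum_card_fiberwise (f := fun x ↦ φ x.1) (t := W)]
    · refine sum_congr rfl fun w _ ↦ ?_
      rw [sq, ← card_product]
      congr 1
      ext ⟨x, y⟩
      simp only [mem_filter, mem_product]
      grind
    · intro x hx
      simp only [coe_filter, mem_product, Set.mem_ofPred_eq] at hx
      exact h _ hx.1.1
  rw [h₂]
  conv_lhs => rw [h₁]
  exact sq_sum_le_card_mul_sum_sq

/-- A finite set of reals can be cut into `s` consecutive blocks of comparable size. -/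
theorem exists_monotone_blocks_s17 {P : Finset ℝ} {s : ℕ} (hs : 0 < s) (hsP : s ≤ #P) :
    ∃ k : ℝ → ℕ, Monotone k ∧ (∀ p ∈ P, k p < s) ∧
      s * #{x ∈ P ×ˢ P | k x.1 = k x.2} ≤ 2 * #P ^ 2 := by
  set m := #P / s + 1 with hm
  have hm0 : 0 < m := Nat.succ_pos _
  have hPm : #P < s * m := by
    rw [hm]; exact Nat.lt_mul_div_succ _ hs
  have hms : s * m ≤ 2 * #P := by
    have := Nat.mul_div_le #P s
    rw [hm, mul_add]; lia
  set r : ℝ → ℕ := fun p ↦ #{q ∈ P | q < p} with hr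
  have hr_mono : Monotone r := fun p p' h ↦
    card_le_card (monotone_filter_right _ fun q _ hq ↦ lt_of_lt_of_le hq h)
  have hr_lt : ∀ p ∈ P, ∀ p', p < p' → r p < r p' := by
    intro p hp p' h
    refine card_lt_card ⟨monotone_filter_right _ fun q _ hq ↦ lt_trans hq h, fun hsub ↦ ?_⟩
    have := hsub (mem_filter.2 ⟨hp, h⟩)
    simp at this
  have hr_inj : Set.InjOn r P := by
    intro p hp p' hp' h
    rcases lt_trichotomy p p' with h' | h' | h'
    · exact absurd h (hr_lt p hp p' h').ne
    · exact h'
    · exact absurd h (hr_lt p' hp' p h').ne'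
  refine ⟨fun p ↦ r p / m, fun p p' h ↦ Nat.div_le_div_right (hr_mono h), fun p hp ↦ ?_, ?_⟩
  · rw [Nat.div_lt_iff_lt_mul hm0]
    exact lt_of_le_of_lt (card_filter_le _ _) hPm
  · have hcount : #{x ∈ P ×ˢ P | r x.1 / m = r x.2 / m} ≤ #P * m := by
      rw [card_filter, sum_product]
      refine (sum_le_card_nsmul _ _ m fun p _ ↦ ?_).trans_eq (smul_eq_mul ..)
      rw [← card_filter]
      calc #{q ∈ P | r p / m = r q / m}
          ≤ #(Finset.Ico (r p / m * m) (r p / m * m + m)) := by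
            refine card_le_card_of_injOn r (fun q hq ↦ ?_) 
              (hr_inj.mono (coe_subset.2 (filter_subset _ _)))
            simp only [coe_filter, Set.mem_ofPred_eq] at hq
            have h₁ := Nat.div_add_mod (r q) m
            have h₂ := Nat.mod_lt (r q) hm0
            simp only [coe_Ico, Set.mem_Ico]
            rw [hq.2, mul_comm]
            lia
        _ = m := by simp
    calc s * #{x ∈ P ×ˢ P | r x.1 / m = r x.2 / m} ≤ s * (#P * m) := by gcongr
      _ = #P * (s * m) := by ring
      _ ≤ #P * (2 * #P) := by gcongr
      _ = 2 * #P ^ 2 := by ring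

theorem card_le_card_mul_self_of_pos {A : Finset ℝ} (hA : ∀ a ∈ A, 0 < a) : #A ≤ #(A * A) := by
  rcases A.eq_empty_or_nonempty with rfl | ⟨a, ha⟩
  · simp
  · exact card_le_card_of_injOn (a * ·) (fun b hb ↦ mul_mem_mul ha hb)
      ((mul_right_injective₀ (hA a ha).ne').injOn)

theorem subRep_le_card_left (A B : Finset ℝ) (x : ℝ) : subRep A B x ≤ #A := card_filter_le _ _

theorem subRep_le_card_right (A B : Finset ℝ) (x : ℝ) : subRep A B x ≤ #B :=
  card_le_card_of_injOn (· - x) (fun a ha ↦ by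
    simp only [coe_filter, Set.mem_ofPred_eq] at ha
    exact ha.2) (sub_left_injective.injOn)

theorem subRep_pos_iff {A B : Finset ℝ} {x : ℝ} : 0 < subRep A B x ↔ x ∈ A - B := by
  rw [subRep, card_pos, mem_sub]
  constructor
  · rintro ⟨a, ha⟩
    rw [mem_filter] at ha
    exact ⟨a, ha.1, a - x, ha.2, by ring⟩
  · rintro ⟨a, ha, b, hb, rfl⟩
    exact ⟨a, mem_filter.2 ⟨ha, by simpa using hb⟩⟩

/-- Collisions of points `(a * c, a - x)` on the line with parameters `(x, c)`. -/
theorem le_card_collisions_of_mul_le {A B : Finset ℝ} {x c : ℝ} {s t : ℕ} {k l : ℝ → ℕ}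
    (hk : Monotone k) (hl : Monotone l) (hc : 0 < c)
    (hks : ∀ a ∈ A, k (a * c) < s) (hls : ∀ b ∈ B, l b < s)
    (ht : t ≤ subRep A B x) (hst : 4 * s ≤ t) :
    t ≤ #{y ∈ A ×ˢ A | y.1 ≠ y.2 ∧ y.1 - x ∈ B ∧ y.2 - x ∈ B ∧
      k (y.1 * c) = k (y.2 * c) ∧ l (y.1 - x) = l (y.2 - x)} := by
  set T := {a ∈ A | a - x ∈ B} with hT
  set U := {y ∈ A ×ˢ A | y.1 ≠ y.2 ∧ y.1 - x ∈ B ∧ y.2 - x ∈ B ∧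
      k (y.1 * c) = k (y.2 * c) ∧ l (y.1 - x) = l (y.2 - x)} with hU
  change t ≤ #T at ht
  have h₁ := card_sq_le_card_mul_card_collisions (T := T) (W := range (2 * s))
    (φ := fun a ↦ k (a * c) + l (a - x)) (fun a ha ↦ by
      rw [hT, mem_filter] at ha
      have := hks a ha.1
      have := hls _ ha.2
      rw [mem_range]; lia)
  have h₂ : #{y ∈ T ×ˢ T | k (y.1 * c) + l (y.1 - x) = k (y.2 * c) + l (y.2 - x)} ≤ #U + #T := by
    rw [← diag_card T]
    refine (card_le_card fun y hy ↦ ?_).trans (card_union_le _ _)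
    simp only [hT, mem_filter, mem_product] at hy
    obtain ⟨⟨⟨ha, hb⟩, ha', hb'⟩, h⟩ := hy
    by_cases hne : y.1 = y.2
    · refine mem_union_right _ (mem_diag.2 ⟨mem_filter.2 ⟨ha, hb⟩, hne⟩)
    · refine mem_union_left _ (mem_filter.2 ⟨mem_product.2 ⟨ha, ha'⟩, hne, hb, hb', ?_⟩)
      rcases le_total y.1 y.2 with hle | hle
      · have := hk (mul_le_mul_of_nonneg_right hle hc.le)
        have := hl (sub_le_sub_right hle x)
        lia
      · have := hk (mul_le_mul_of_nonneg_right hle hc.le)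
        have := hl (sub_le_sub_right hle x)
        lia
  rw [card_range] at h₁
  by_contra! hlt
  have h₃ : #U + #T < 2 * #T := by lia
  rcases Nat.eq_zero_or_pos s with rfl | hs
  · have : #T = 0 := by simpa using h₁
    lia
  · have : #T ^ 2 < #T ^ 2 := by
      calc #T ^ 2 ≤ 2 * s * (#U + #T) := h₁.trans (by gcongr)
        _ < 2 * s * (2 * #T) := by gcongr
        _ = 4 * s * #T := by ring
        _ ≤ #T * #T := by gcongr; lia
        _ = #T ^ 2 := by ring
    exact lt_irrefl _ this

/-- A Szemerédi–Trotter type bound: the number of popular differences between a set `A` of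
positive reals and an arbitrary set `B`. -/
theorem card_mul_card_mul_pow_three_le {A B X : Finset ℝ} (hA : ∀ a ∈ A, 0 < a) {t : ℕ}
    (hX : ∀ x ∈ X, t ≤ subRep A B x) :
    #X * #A * t ^ 3 ≤ 256 * #(A * A) ^ 2 * #B ^ 2 := by
  rcases Nat.eq_zero_or_pos t with rfl | ht
  · simp
  rcases X.eq_empty_or_nonempty with rfl | ⟨x₀, hx₀⟩
  · simp
  have htA : t ≤ #A := (hX x₀ hx₀).trans (subRep_le_card_left ..)
  have htB : t ≤ #B := (hX x₀ hx₀).trans (subRep_le_card_right ..)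
  have hAA := card_le_card_mul_self_of_pos hA
  set P := A * A with hP
  rcases lt_or_ge t 4 with ht4 | ht4
  · have hXc : #X ≤ #A * #B := by
      refine (card_le_card fun x hx ↦ ?_).trans card_sub_le
      exact subRep_pos_iff.1 (ht.trans_le (hX x hx))
    calc #X * #A * t ^ 3 ≤ #A * #B * #A * 4 ^ 3 := by gcongr
      _ = 64 * #A ^ 2 * (#B * 1) := by ring
      _ ≤ 256 * #P ^ 2 * (#B * #B) := by gcongr <;> lia
      _ = _ := by ring
  set s := t / 4 with hs
  have hs0 : 0 < s := by lia
  obtain ⟨k, hk, hks, hkc⟩ := exists_monotone_blocks_s17 (P := P) hs0 (by lia)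
  obtain ⟨l, hl, hls, hlc⟩ := exists_monotone_blocks_s17 (P := B) hs0 (by lia)
  have key : #X * #A * t ≤
      #{y ∈ P ×ˢ P | k y.1 = k y.2} * #{y ∈ B ×ˢ B | l y.1 = l y.2} := by
    rw [← card_product, ← card_product, ← smul_eq_mul]
    refine (card_nsmul_le_sum (X ×ˢ A) _ t fun z hz ↦
      le_card_collisions_of_mul_le hk hl (hA z.2 (mem_product.1 hz).2)
        (fun a ha ↦ hks _ (mul_mem_mul ha (mem_product.1 hz).2)) hls
        (hX z.1 (mem_product.1 hz).1) (by lia)).trans ?_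
    rw [← card_sigma]
    refine card_le_card_of_injOn
      (fun z ↦ ((z.2.1 * z.1.2, z.2.2 * z.1.2), (z.2.1 - z.1.1, z.2.2 - z.1.1))) ?_ ?_
    · rintro ⟨⟨x, c⟩, a, a'⟩ hz
      simp only [coe_sigma, Set.mem_sigma_iff, mem_coe, mem_product, mem_filter] at hz ⊢
      obtain ⟨⟨hx, hc⟩, ⟨ha, ha'⟩, hne, hb, hb', hk, hl⟩ := hz
      exact ⟨⟨⟨mul_mem_mul ha hc, mul_mem_mul ha' hc⟩, hk⟩, ⟨hb, hb'⟩, hl⟩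
    · rintro ⟨⟨x, c⟩, a, a'⟩ hz ⟨⟨y, d⟩, b, b'⟩ hw h
      simp only [coe_sigma, Set.mem_sigma_iff, mem_coe, mem_product, mem_filter] at hz hw
      simp only [Prod.mk.injEq] at h
      obtain ⟨⟨h₁, h₂⟩, h₃, h₄⟩ := h
      have hne : a - a' ≠ 0 := sub_ne_zero.2 hz.2.2.1
      have hcd : c = d := mul_left_cancel₀ hne (by linear_combination h₁ - h₂ - d * (h₃ - h₄))
      subst hcd
      have hc : c ≠ 0 := (hA c hz.1.2).ne'
      obtain rfl : a = b := mul_right_cancel₀ hc h₁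
      obtain rfl : a' = b' := mul_right_cancel₀ hc h₂
      obtain rfl : x = y := by linarith
      rfl
  have ht8 : t ≤ 8 * s := by lia
  calc #X * #A * t ^ 3 = #X * #A * t * t ^ 2 := by ring
    _ ≤ #{y ∈ P ×ˢ P | k y.1 = k y.2} * #{y ∈ B ×ˢ B | l y.1 = l y.2} * (8 * s) ^ 2 := by
      gcongr
    _ = 64 * (s * #{y ∈ P ×ˢ P | k y.1 = k y.2}) * (s * #{y ∈ B ×ˢ B | l y.1 = l y.2}) := by ring
    _ ≤ 64 * (2 * #P ^ 2) * (2 * #B ^ 2) := by gcongr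
    _ = _ := by ring

theorem sum_sum_Ioc_subRep_le {A B : Finset ℝ} (hA : ∀ a ∈ A, 0 < a) (hA0 : 0 < #A) (k : ℕ)
    {f : ℕ → ℝ} (hf : ∀ t, 0 ≤ f t) :
    ∑ x ∈ A - B, ∑ t ∈ Ioc k (subRep A B x), f t ≤
      ∑ t ∈ Ioc k #A, f t * (256 * #(A * A) ^ 2 * #B ^ 2 / #A / t ^ 3) := by
  have h₁ : ∀ x ∈ A - B, ∑ t ∈ Ioc k (subRep A B x), f t =
      ∑ t ∈ Ioc k #A, if t ≤ subRep A B x then f t else 0 := by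
    intro x _
    rw [← sum_filter]
    congr 1
    ext t
    have := subRep_le_card_left A B x
    simp only [mem_Ioc, mem_filter]
    lia
  rw [sum_congr rfl h₁, sum_comm]
  refine sum_le_sum fun t ht ↦ ?_
  rw [← sum_filter, sum_const, nsmul_eq_mul, mul_comm]
  refine mul_le_mul_of_nonneg_left ?_ (hf t)
  have ht0 : (0 : ℝ) < t := by
    rw [mem_Ioc] at ht
    exact_mod_cast (by lia : 0 < t)
  have hA0' : (0 : ℝ) < #A := by exact_mod_cast hA0
  rw [le_div_iff₀ (by positivity), le_div_iff₀ hA0']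
  have := card_mul_card_mul_pow_three_le (B := B) (X := {x ∈ A - B | t ≤ subRep A B x}) hA
    fun x hx ↦ (mem_filter.1 hx).2
  calc _ = (#{x ∈ A - B | t ≤ subRep A B x} : ℝ) * #A * t ^ 3 := by ring
    _ ≤ _ := by exact_mod_cast this

theorem pow_three_le_sum_Ioc (d : ℕ) : (d : ℝ) ^ 3 ≤ ∑ t ∈ Ioc 0 d, 3 * (t : ℝ) ^ 2 := by
  induction d with
  | zero => simp
  | succ d ih =>
    rw [← insert_Ioc_right_eq_Ioc_add_one (Nat.zero_le d), sum_insert (by simp)]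
    push_cast
    nlinarith [(Nat.cast_nonneg d : (0 : ℝ) ≤ d)]

theorem sq_le_add_sum_Ioc (k d : ℕ) :
    (d : ℝ) ^ 2 ≤ k * d + ∑ t ∈ Ioc k d, 2 * (t : ℝ) := by
  induction d with
  | zero => simp
  | succ d ih =>
    have hk : (0 : ℝ) ≤ k := Nat.cast_nonneg k
    rcases le_or_gt (d + 1) k with h | h
    · rw [Ioc_eq_empty (by lia), sum_empty]
      have : ((d + 1 : ℕ) : ℝ) ≤ k := by exact_mod_cast h
      nlinarith [(Nat.cast_nonneg (d + 1) : (0 : ℝ) ≤ (d + 1 : ℕ))]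
    · rw [← insert_Ioc_right_eq_Ioc_add_one (by lia : k ≤ d), sum_insert (by simp)]
      push_cast
      nlinarith

/-- The third moment of the representation function of `A - A`. -/
theorem sum_subRep_pow_three_le {A : Finset ℝ} (hA : ∀ a ∈ A, 0 < a) (hA0 : 0 < #A) :
    ∑ x ∈ A - A, (subRep A A x : ℝ) ^ 3 ≤
      768 * #(A * A) ^ 2 * #A * (1 + Real.log #A) := by
  have hA0' : (0 : ℝ) < #A := by exact_mod_cast hA0
  have hlog : ∑ t ∈ Ioc 0 #A, (t : ℝ)⁻¹ ≤ 1 + Real.log #A := by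
    have := harmonic_le_one_add_log #A
    rw [harmonic_eq_sum_Icc] at this
    push_cast at this
    exact this
  calc ∑ x ∈ A - A, (subRep A A x : ℝ) ^ 3
      ≤ ∑ x ∈ A - A, ∑ t ∈ Ioc 0 (subRep A A x), 3 * (t : ℝ) ^ 2 :=
        sum_le_sum fun x _ ↦ pow_three_le_sum_Ioc _
    _ ≤ _ := sum_sum_Ioc_subRep_le hA hA0 0 fun t ↦ by positivity
    _ = 768 * #(A * A) ^ 2 * #A * ∑ t ∈ Ioc 0 #A, (t : ℝ)⁻¹ := by
      rw [mul_sum]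
      refine sum_congr rfl fun t ht ↦ ?_
      have ht0 : (t : ℝ) ≠ 0 := by
        rw [mem_Ioc] at ht
        exact_mod_cast ht.1.ne'
      field_simp
      ring
    _ ≤ _ := by gcongr

theorem sum_subRep (A B : Finset ℝ) : ∑ x ∈ A - B, subRep A B x = #A * #B := by
  rw [← card_product]
  rw [card_eq_sum_card_fiberwise (f := fun p : ℝ × ℝ ↦ p.1 - p.2) (t := A - B)
    (fun p hp ↦ sub_mem_sub (mem_product.1 hp).1 (mem_product.1 hp).2)]
  refine sum_congr rfl fun x _ ↦ ?_
  refine card_nbij' (fun a ↦ (a, a - x)) Prod.fst ?_ ?_ ?_ ?_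
  · intro a ha
    simpa using ha
  · rintro ⟨a, b⟩ h
    simp only [coe_filter, mem_product, Set.mem_ofPred_eq] at h ⊢
    obtain ⟨⟨ha, hb⟩, rfl⟩ := h
    exact ⟨ha, by simpa using hb⟩
  · intro a _
    rfl
  · rintro ⟨a, b⟩ h
    simp only [coe_filter, mem_product, Set.mem_ofPred_eq] at h
    obtain ⟨⟨ha, hb⟩, rfl⟩ := h
    simp

/-- The second moment of the representation function of `A - B`. -/
theorem sum_subRep_sq_le {A B : Finset ℝ} (hA : ∀ a ∈ A, 0 < a) (hA0 : 0 < #A) (hB0 : 0 < #B) :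
    ∑ x ∈ A - B, (subRep A B x : ℝ) ^ 2 ≤ 514 * #(A * A) * #B * √(#B) := by
  have hA0' : (0 : ℝ) < #A := by exact_mod_cast hA0
  have hB1 : (1 : ℝ) ≤ #B := by exact_mod_cast hB0
  have hAA : (#A : ℝ) ≤ #(A * A) := by exact_mod_cast card_le_card_mul_self_of_pos hA
  set P : ℝ := (#(A * A) : ℝ) with hP
  set r := √(#B : ℝ) with hr
  have hr1 : 1 ≤ r := Real.one_le_sqrt.2 hB1
  have hr2 : r ^ 2 = #B := Real.sq_sqrt (by positivity)
  have hPA : 1 ≤ P / #A := (one_le_div hA0').2 hAA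
  set u := P / #A * r with hu
  have hu1 : 1 ≤ u := one_le_mul_of_one_le_of_one_le hPA hr1
  set k := ⌈u⌉₊ with hk
  have hku : u ≤ k := Nat.le_ceil u
  have hku2 : (k : ℝ) ≤ 2 * u := by
    have := Nat.ceil_lt_add_one (by linarith : 0 ≤ u)
    linarith
  have hk0 : (0 : ℝ) < k := by linarith
  have hsum : ∑ t ∈ Ioc k #A, ((t : ℝ) ^ 2)⁻¹ ≤ (k : ℝ)⁻¹ := by
    rcases le_total k #A with h | h
    · refine (sum_Ioc_inv_sq_le_sub (by exact_mod_cast hk0.ne') h).trans ?_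
      simp
    · rw [Ioc_eq_empty (by lia), sum_empty]
      positivity
  calc ∑ x ∈ A - B, (subRep A B x : ℝ) ^ 2
      ≤ ∑ x ∈ A - B, (k * (subRep A B x : ℝ) + ∑ t ∈ Ioc k (subRep A B x), 2 * (t : ℝ)) :=
        sum_le_sum fun x _ ↦ sq_le_add_sum_Ioc _ _
    _ = k * (#A * #B) + ∑ x ∈ A - B, ∑ t ∈ Ioc k (subRep A B x), 2 * (t : ℝ) := by
      rw [sum_add_distrib, ← mul_sum]
      congr 2
      exact_mod_cast sum_subRep A B
    _ ≤ k * (#A * #B) + ∑ t ∈ Ioc k #A, 2 * (t : ℝ) * (256 * P ^ 2 * #B ^ 2 / #A / t ^ 3) := by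
      gcongr
      exact sum_sum_Ioc_subRep_le hA hA0 k fun t ↦ by positivity
    _ = k * (#A * #B) + 512 * P ^ 2 * #B ^ 2 / #A * ∑ t ∈ Ioc k #A, ((t : ℝ) ^ 2)⁻¹ := by
      rw [mul_sum]
      congr 1
      refine sum_congr rfl fun t ht ↦ ?_
      have ht0 : (t : ℝ) ≠ 0 := by
        rw [mem_Ioc] at ht
        exact_mod_cast (by lia : t ≠ 0)
      field_simp
      ring
    _ ≤ 2 * u * (#A * #B) + 512 * P ^ 2 * #B ^ 2 / #A * u⁻¹ := by
      gcongr
      exact hsum.trans (inv_anti₀ (by linarith) hku)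
    _ = 514 * P * #B * r := by
      have hP0 : P ≠ 0 := by linarith
      have hr0 : r ≠ 0 := by linarith
      rw [hu, ← hr2]
      field_simp
      ring

theorem sum_subRep_mul_subRep_le (A D : Finset ℝ) :
    ∑ s ∈ A - A, subRep A A s * subRep D D s ≤ ∑ x ∈ A - D, subRep A D x ^ 2 := by
  simp only [subRep, sq, ← card_product, ← card_sigma]
  refine card_le_card_of_injOn (fun z ↦ ⟨z.2.1 - z.2.2, (z.2.1, z.2.1 - z.1)⟩) ?_ ?_
  · rintro ⟨s, a, d⟩ h
    simp only [coe_sigma, Set.mem_sigma_iff, mem_coe, mem_product, mem_filter] at h ⊢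
    obtain ⟨-, ⟨ha, has⟩, hd, hds⟩ := h
    exact ⟨sub_mem_sub ha hd, ⟨ha, by simpa using hd⟩, has,
      by rwa [show a - s - (a - d) = d - s by ring]⟩
  · rintro ⟨s, a, d⟩ - ⟨s', a', d'⟩ - h
    simp only [Sigma.mk.injEq, heq_eq_eq, Prod.mk.injEq] at h
    obtain ⟨h₁, rfl, h₂⟩ := h
    obtain rfl : s = s' := by linarith
    obtain rfl : d = d' := by linarith
    rfl

/-- The collisions of the difference map on `(A ∩ (A + s)) × A`, summed over `s`. -/
theorem sum_card_collisions_le (A : Finset ℝ) :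
    ∑ s ∈ A - A, #{y ∈ ({b ∈ A | b - s ∈ A} ×ˢ A) ×ˢ ({b ∈ A | b - s ∈ A} ×ˢ A) |
      y.1.1 - y.1.2 = y.2.1 - y.2.2} ≤ ∑ x ∈ A - A, subRep A A x ^ 3 := by
  simp only [subRep, pow_three, ← card_product, ← card_sigma]
  refine card_le_card_of_injOn
    (fun z ↦ ⟨z.2.1.1 - z.2.2.1, (z.2.1.1, z.2.1.2, z.2.1.1 - z.1)⟩) ?_ ?_
  · rintro ⟨s, ⟨b, a⟩, b', a'⟩ h
    simp only [coe_sigma, Set.mem_sigma_iff, mem_coe, mem_product, mem_filter] at h ⊢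
    obtain ⟨-, ⟨⟨⟨hb, hbs⟩, ha⟩, ⟨hb', hbs'⟩, ha'⟩, h⟩ := h
    refine ⟨sub_mem_sub hb hb', ⟨hb, by simpa using hb'⟩, ⟨ha, ?_⟩, hbs, ?_⟩
    · rwa [show a - (b - b') = a' by linarith]
    · rwa [show b - s - (b - b') = b' - s by ring]
  · rintro ⟨s, ⟨b, a⟩, b', a'⟩ hz ⟨s', ⟨c, d⟩, c', d'⟩ hw h
    simp only [coe_sigma, Set.mem_sigma_iff, mem_coe, mem_product, mem_filter] at hz hw
    simp only [Sigma.mk.injEq, heq_eq_eq, Prod.mk.injEq] at h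
    obtain ⟨h₁, rfl, rfl, h₂⟩ := h
    obtain rfl : s = s' := by linarith
    obtain rfl : b' = c' := by linarith
    obtain rfl : a' = d' := by linarith [hz.2.2, hw.2.2]
    rfl

/-- A Katz–Koester type inequality: differences of `A ∩ (A + s)` and `A` are represented
in `(A - A) ∩ (A - A + s)`. -/
theorem sq_subRep_mul_card_le (A : Finset ℝ) (s : ℝ) :
    (subRep A A s * #A) ^ 2 ≤ subRep (A - A) (A - A) s *
      #{y ∈ ({b ∈ A | b - s ∈ A} ×ˢ A) ×ˢ ({b ∈ A | b - s ∈ A} ×ˢ A) |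
        y.1.1 - y.1.2 = y.2.1 - y.2.2} := by
  have := card_sq_le_card_mul_card_collisions (T := {b ∈ A | b - s ∈ A} ×ˢ A)
    (W := {d ∈ A - A | d - s ∈ A - A}) (φ := fun y ↦ y.1 - y.2) (by
      rintro ⟨b, a⟩ h
      simp only [mem_product, mem_filter] at h ⊢
      refine ⟨sub_mem_sub h.1.1 h.2, ?_⟩
      rw [sub_right_comm]
      exact sub_mem_sub h.1.2 h.2)
  rwa [card_product] at this

theorem sum_sq_pow_three_le {ι : Type*} (S : Finset ι) {w : ι → ℝ} (hw : ∀ i ∈ S, 0 ≤ w i) :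
    (∑ i ∈ S, w i ^ 2) ^ 3 ≤ (∑ i ∈ S, w i ^ 3) ^ 2 * #S := by
  have h₁ : (∑ i ∈ S, w i ^ 2) ^ 2 ≤ (∑ i ∈ S, w i ^ 3) * ∑ i ∈ S, w i :=
    sum_sq_le_sum_mul_sum_of_sq_le_mul S (fun i hi ↦ pow_nonneg (hw i hi) 3) hw
      fun i _ ↦ by ring_nf; rfl
  have h₂ : (∑ i ∈ S, w i) ^ 2 ≤ #S * ∑ i ∈ S, w i ^ 2 := sq_sum_le_card_mul_sum_sq
  have h₀ : 0 ≤ ∑ i ∈ S, w i ^ 2 := sum_nonneg fun i _ ↦ sq_nonneg _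
  rcases h₀.eq_or_lt with h | h
  · rw [← h, zero_pow three_ne_zero]; positivity
  refine le_of_mul_le_mul_right ?_ h
  calc (∑ i ∈ S, w i ^ 2) ^ 3 * ∑ i ∈ S, w i ^ 2 = ((∑ i ∈ S, w i ^ 2) ^ 2) ^ 2 := by ring
    _ ≤ ((∑ i ∈ S, w i ^ 3) * ∑ i ∈ S, w i) ^ 2 := by gcongr
    _ = (∑ i ∈ S, w i ^ 3) ^ 2 * (∑ i ∈ S, w i) ^ 2 := by ring
    _ ≤ (∑ i ∈ S, w i ^ 3) ^ 2 * (#S * ∑ i ∈ S, w i ^ 2) := by gcongr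
    _ = _ := by ring

/-- A Schoen–Shkredov type inequality between the size of `A - A` and energies. -/
theorem card_pow_eight_le (A : Finset ℝ) (hA0 : 0 < #A) :
    (#A : ℝ) ^ 8 ≤ #(A - A) * ((∑ x ∈ A - A, (subRep A A x : ℝ) ^ 3) *
      ∑ x ∈ A - (A - A), (subRep A (A - A) x : ℝ) ^ 2) := by
  set w : ℝ → ℝ := fun s ↦ √(subRep A A s) with hw
  have hw2 : ∀ s, w s ^ 2 = subRep A A s := fun s ↦ Real.sq_sqrt (Nat.cast_nonneg _)
  have h₁ : ((#A : ℝ) ^ 2) ^ 3 ≤ (∑ s ∈ A - A, w s ^ 3) ^ 2 * #(A - A) := by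
    refine le_of_eq_of_le ?_ (sum_sq_pow_three_le (A - A) fun s _ ↦ Real.sqrt_nonneg _)
    simp only [hw2]
    rw [sq, ← Nat.cast_mul, ← sum_subRep A A, Nat.cast_sum]
  set c : ℝ → ℕ := fun s ↦ #{y ∈ ({b ∈ A | b - s ∈ A} ×ˢ A) ×ˢ ({b ∈ A | b - s ∈ A} ×ˢ A) |
    y.1.1 - y.1.2 = y.2.1 - y.2.2} with hc
  have h₂ : (∑ s ∈ A - A, #A * w s ^ 3) ^ 2 ≤ (∑ s ∈ A - A, (c s : ℝ)) *
      ∑ s ∈ A - A, (subRep A A s : ℝ) * subRep (A - A) (A - A) s := by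
    refine sum_sq_le_sum_mul_sum_of_sq_le_mul _ (fun s _ ↦ by positivity)
      (fun s _ ↦ by positivity) fun s _ ↦ ?_
    have : ((subRep A A s : ℝ) * #A) ^ 2 ≤ subRep (A - A) (A - A) s * c s := by
      exact_mod_cast sq_subRep_mul_card_le A s
    calc ((#A : ℝ) * w s ^ 3) ^ 2 = (w s ^ 2) * ((w s ^ 2) * #A) ^ 2 := by ring
      _ = (subRep A A s : ℝ) * (subRep A A s * #A) ^ 2 := by rw [hw2]
      _ ≤ (subRep A A s : ℝ) * (subRep (A - A) (A - A) s * c s) := by gcongr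
      _ = _ := by ring
  have h₃ : ∑ s ∈ A - A, (c s : ℝ) ≤ ∑ x ∈ A - A, (subRep A A x : ℝ) ^ 3 := by
    exact_mod_cast sum_card_collisions_le A
  have h₄ : ∑ s ∈ A - A, (subRep A A s : ℝ) * subRep (A - A) (A - A) s ≤
      ∑ x ∈ A - (A - A), (subRep A (A - A) x : ℝ) ^ 2 := by
    exact_mod_cast sum_subRep_mul_subRep_le A (A - A)
  calc (#A : ℝ) ^ 8 = #A ^ 2 * (#A ^ 2) ^ 3 := by ring
    _ ≤ #A ^ 2 * ((∑ s ∈ A - A, w s ^ 3) ^ 2 * #(A - A)) := by gcongr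
    _ = #(A - A) * (∑ s ∈ A - A, #A * w s ^ 3) ^ 2 := by rw [← mul_sum]; ring
    _ ≤ _ := by gcongr; exact h₂.trans (by gcongr)

theorem exists_card_pow_le : ∃ C : ℝ, 0 < C ∧ ∀ A : Finset ℝ, (∀ a ∈ A, 0 < a) → 2 ≤ #A →
    (#A : ℝ) ^ 14 ≤ C * #(A * A) ^ 6 * #(A - A) ^ 5 * Real.log #A ^ 2 := by
  refine ⟨(768 * 514 * 3) ^ 2, by positivity, fun A hA hA2 ↦ ?_⟩
  have hA0 : 0 < #A := by lia
  have hn : (0 : ℝ) < #A := by exact_mod_cast hA0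
  have hD0 : 0 < #(A - A) := by
    have hne := card_pos.1 hA0
    exact card_pos.2 (hne.sub hne)
  have hlog : 1 + Real.log #A ≤ 3 * Real.log #A := by
    have : Real.log 2 ≤ Real.log #A := Real.log_le_log (by norm_num) (by exact_mod_cast hA2)
    linarith [Real.log_two_gt_d9]
  have hlog0 : 0 ≤ Real.log #A := Real.log_natCast_nonneg _
  have h₁ := sum_subRep_pow_three_le hA hA0
  have h₂ := sum_subRep_sq_le (B := A - A) hA hA0 hD0
  have h₃ := card_pow_eight_le A hA0
  set n : ℝ := (#A : ℝ) with hn_def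
  set p : ℝ := (#(A * A) : ℝ) with hp
  set d : ℝ := (#(A - A) : ℝ) with hd
  set L := Real.log n with hL
  have hd0 : 0 ≤ d := Nat.cast_nonneg _
  have hp0 : 0 ≤ p := Nat.cast_nonneg _
  have h₄ : n ^ 7 ≤ 768 * 514 * 3 * (p ^ 3 * d ^ 2 * L * √d) := by
    refine le_of_mul_le_mul_right ?_ hn
    calc n ^ 7 * n = n ^ 8 := by ring
      _ ≤ _ := h₃
      _ ≤ d * ((768 * p ^ 2 * n * (3 * L)) * (514 * p * d * √d)) := by
        gcongr
        exact h₁.trans (by gcongr)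
      _ = _ := by ring
  calc n ^ 14 = (n ^ 7) ^ 2 := by ring
    _ ≤ (768 * 514 * 3 * (p ^ 3 * d ^ 2 * L * √d)) ^ 2 := by gcongr
    _ = (768 * 514 * 3) ^ 2 * (p ^ 6 * d ^ 4 * L ^ 2 * √d ^ 2) := by ring
    _ = (768 * 514 * 3) ^ 2 * p ^ 6 * d ^ 5 * L ^ 2 := by rw [Real.sq_sqrt hd0]; ring

theorem stmt17 : ∃ K : ℝ, 0 < K ∧
    ∀ A : Finset ℝ, (∀ a ∈ A, 0 < a) → 2 ≤ A.card →
    max ((A * A).card : ℝ) ((A - A).card : ℝ) ≥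
      K * (A.card : ℝ) ^ ((14 : ℝ) / 11) / (Real.log A.card) ^ ((2 : ℝ) / 11) := by
  obtain ⟨C, hC, h⟩ := exists_card_pow_le
  refine ⟨(C⁻¹) ^ ((1 : ℝ) / 11), by positivity, fun A hA hA2 ↦ ?_⟩
  have h := h A hA hA2
  have hL : 0 < Real.log #A := Real.log_pos (by exact_mod_cast hA2)
  set n : ℝ := (#A : ℝ) with hn
  set m : ℝ := max (#(A * A) : ℝ) (#(A - A) : ℝ) with hm
  have hm0 : 0 ≤ m := le_max_of_le_left (Nat.cast_nonneg _)
  have hn0 : 0 ≤ n := Nat.cast_nonneg _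
  have h₁ : C⁻¹ * n ^ 14 / Real.log n ^ 2 ≤ m ^ 11 := by
    rw [div_le_iff₀ (by positivity), inv_mul_le_iff₀ hC]
    calc n ^ 14 ≤ C * #(A * A) ^ 6 * #(A - A) ^ 5 * Real.log n ^ 2 := h
      _ ≤ C * m ^ 6 * m ^ 5 * Real.log n ^ 2 := by
        gcongr
        · exact le_max_left _ _
        · exact le_max_right _ _
      _ = _ := by ring
  have h₂ := Real.rpow_le_rpow (by positivity) h₁ (by norm_num : (0 : ℝ) ≤ 1 / 11)
  rw [Real.div_rpow (by positivity) (by positivity), Real.mul_rpow (by positivity) (by positivity),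
    ← Real.rpow_natCast n, ← Real.rpow_natCast (Real.log n), ← Real.rpow_natCast m,
    ← Real.rpow_mul hn0, ← Real.rpow_mul hL.le, ← Real.rpow_mul hm0] at h₂
  norm_num at h₂ ⊢
  exact h₂
end
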